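/- arXiv:2605.05346 — 2 statements merged into one kernel-verified Lean document; each statement's English description precedes it below -/
import Mathlib

section
/- Every K_4-free graph G on n vertices can be made bipartite by removing at most n^2/9 edges; that is, there exists a partition of the vertex set of G into two (not necessarily balanced) parts such that the number of edges of G with both endpoints in the same part is at most n^2/9. -/
set_option linter.unusedSectionVars false

namespace K4

open Finset

lemma numeric (δ ω r c : ℝ) (h0 : 4/9 < δ) (h1 : δ ≤ 2/3) (hω : 1/9 - δ/2 + δ^2 < ω)
    (ht : 3*ω ≤ (1-r)*δ) (h4 : 2/3 < δ+2*c) (h5 : 4/3 < 3*δ-3*c+4/3*r^2)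
    (hc : 3*c ≤ 2*r^2) (hr : 0 ≤ r) : False := by
  have hrd : r*δ < 3*((2/3-δ)*(δ-1/6)) := by nlinarith
  rcases le_or_gt (10/21) δ with hd | hd
  · have h6 : (3/4)*(2/3-δ) < r^2 := by linarith
    have h7 : 12*(2/3-δ)*(δ-1/6)^2 ≤ δ^2 := by
      nlinarith [mul_nonneg (sub_nonneg.2 hd) (sub_nonneg.2 h1), sq_nonneg (δ-1/2),
        mul_nonneg (sub_nonneg.2 hd) (sq_nonneg (δ-1/2))]
    have h8 : (r*δ)^2 ≤ (3*((2/3-δ)*(δ-1/6)))^2 := by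
      apply pow_le_pow_left₀ (by positivity) hrd.le
    have h9 : (3/4)*(2/3-δ)*δ^2 < r^2*δ^2 := by
      apply mul_lt_mul_of_pos_right h6; positivity
    nlinarith [mul_le_mul_of_nonneg_left h7 (sub_nonneg.2 h1)]
  · have h6 : 7/4 - 27/8*δ < r^2 := by linarith
    have h7 : r ≤ 5/2 - 3*δ - (2/(3*(23/50)) - δ/(3*(23/50)^2)) := by
      by_contra hcon
      push Not at hcon
      have : (5/2 - 3*δ - (2/(3*(23/50)) - δ/(3*(23/50)^2)))*δ < r*δ :=
        mul_lt_mul_of_pos_right hcon (by linarith)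
      nlinarith [sq_nonneg (δ-23/50)]
    have h8 := pow_le_pow_left₀ hr h7 2
    ring_nf at h8
    nlinarith [mul_pos (sub_pos.2 h0) (sub_pos.2 hd)]

/-- indicator -/
def ι (b : Bool) : ℝ := cond b 1 0

lemma ι_nonneg (b : Bool) : 0 ≤ ι b := by cases b <;> simp [ι]
lemma ι_le (b : Bool) : ι b ≤ 1 := by cases b <;> simp [ι]
lemma ι_sq (b : Bool) : ι b * ι b = ι b := by cases b <;> simp [ι]

variable {V : Type*} [DecidableEq V]

def ed (b : V → V → Bool) (S : Finset V) : ℝ := ∑ x ∈ S, ∑ y ∈ S, ι (b x y)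
def ls (b : V → V → Bool) (S : Finset V) (f : V → Bool) : ℝ :=
  ∑ x ∈ S, ∑ y ∈ S, ι (b x y) * ι (f x == f y)
def dg (b : V → V → Bool) (S : Finset V) (x : V) : ℝ := ∑ y ∈ S, ι (b x y)
def cd (b : V → V → Bool) (S : Finset V) (x y : V) : ℝ := ∑ v ∈ S, ι (b x v) * ι (b y v)
def tr (b : V → V → Bool) (S : Finset V) : ℝ := ∑ x ∈ S, ∑ y ∈ S, ι (b x y) * cd b S x y

structure Good (b : V → V → Bool) : Prop where
  symm : ∀ x y, b x y = b y x
  irr : ∀ x, b x x = false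
  k4 : ∀ x y z w, (b x y && b x z && b x w && b y z && b y w && b z w) = false

lemma half {b : V → V → Bool} (hb : Good b) (S : Finset V) : ∃ f, 2 * ls b S f ≤ ed b S := by
  induction S using Finset.induction_on with
  | empty => exact ⟨fun _ => true, by simp [ls, ed]⟩
  | insert v S hv ih =>
    obtain ⟨f, hf⟩ := ih
    have key : ∀ e, ls b (insert v S) (fun x => if x = v then e else f x)
        = 2 * ∑ y ∈ S, ι (b v y) * ι (e == f y) + ls b S f := by
      intro e
      have hne : ∀ y ∈ S, y ≠ v := fun y hy h => hv (h ▸ hy)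
      unfold ls
      rw [sum_insert hv, sum_insert hv]
      simp only [hb.irr, if_true]
      have e1 : ∑ y ∈ S, ι (b v y) * ι (e == (if y = v then e else f y))
        = ∑ y ∈ S, ι (b v y) * ι (e == f y) :=
        sum_congr rfl fun y hy => by rw [if_neg (hne y hy)]
      have e2 : ∑ x ∈ S, ∑ y ∈ insert v S, ι (b x y) *
            ι ((if x = v then e else f x) == (if y = v then e else f y))
        = ∑ x ∈ S, (ι (b v x) * ι (e == f x) + ∑ y ∈ S, ι (b x y) * ι (f x == f y)) := by
        refine sum_congr rfl fun x hx => ?_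
        rw [sum_insert hv, if_neg (hne x hx), if_pos rfl, hb.symm x v, Bool.beq_comm]
        congr 1
        exact sum_congr rfl fun y hy => by rw [if_neg (hne y hy)]
      rw [e1, e2, sum_add_distrib]
      simp only [ι, cond_false]
      ring
    have ked : ed b (insert v S) = 2 * ∑ y ∈ S, ι (b v y) + ed b S := by
      unfold ed
      rw [sum_insert hv, sum_insert hv]
      have : ∑ x ∈ S, ∑ y ∈ insert v S, ι (b x y)
          = ∑ x ∈ S, (ι (b v x) + ∑ y ∈ S, ι (b x y)) :=
        sum_congr rfl fun x hx => by rw [sum_insert hv, hb.symm x v]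
      rw [this, sum_add_distrib, hb.irr]
      simp only [ι, cond_false]
      ring
    have hsum : ∑ y ∈ S, ι (b v y) * ι (true == f y) + ∑ y ∈ S, ι (b v y) * ι (false == f y)
        = ∑ y ∈ S, ι (b v y) := by
      rw [← sum_add_distrib]
      refine sum_congr rfl fun y _ => ?_
      cases f y <;> simp [ι]
    by_contra hcon
    push Not at hcon
    have h1 := hcon (fun x => if x = v then true else f x)
    have h2 := hcon (fun x => if x = v then false else f x)
    rw [key, ked] at h1 h2
    linarith

lemma sum_dg (b : V → V → Bool) (S : Finset V) : ∑ x ∈ S, dg b S x = ed b S := rfl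

lemma cs_dg (b : V → V → Bool) (S : Finset V) :
    ed b S ^ 2 ≤ S.card * ∑ x ∈ S, dg b S x ^ 2 := by
  rw [← sum_dg]; exact sq_sum_le_card_mul_sum_sq

lemma sum1 (b : V → V → Bool) (S : Finset V) :
    ∑ _v ∈ S, ∑ x ∈ S, ∑ y ∈ S, ι (b x y) = S.card * ed b S := by
  simp [ed]

lemma sum2 {b : V → V → Bool} (hb : Good b) (S : Finset V) :
    ∑ v ∈ S, ∑ x ∈ S, ∑ y ∈ S, ι (b x y) * ι (b v x) = ∑ x ∈ S, dg b S x ^ 2 := by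
  rw [sum_comm]
  refine sum_congr rfl fun x _ => ?_
  rw [sq, dg, sum_mul_sum]
  refine sum_congr rfl fun y _ => ?_
  refine sum_congr rfl fun z _ => ?_
  rw [hb.symm y x]; ring

lemma sum3 {b : V → V → Bool} (hb : Good b) (S : Finset V) :
    ∑ v ∈ S, ∑ x ∈ S, ∑ y ∈ S, ι (b x y) * ι (b v y) = ∑ x ∈ S, dg b S x ^ 2 := by
  rw [← sum2 hb]
  refine sum_congr rfl fun v _ => ?_
  rw [sum_comm]
  refine sum_congr rfl fun x _ => ?_
  refine sum_congr rfl fun y _ => ?_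
  rw [hb.symm]

lemma sum4 {b : V → V → Bool} (hb : Good b) (S : Finset V) :
    ∑ v ∈ S, ∑ x ∈ S, ∑ y ∈ S, ι (b x y) * (ι (b v x) * ι (b v y)) = tr b S := by
  rw [sum_comm]
  refine sum_congr rfl fun x _ => ?_
  rw [sum_comm]
  refine sum_congr rfl fun y _ => ?_
  rw [cd, mul_sum]
  refine sum_congr rfl fun v _ => ?_
  rw [hb.symm x v, hb.symm y v]

lemma cutN {b : V → V → Bool} (hb : Good b) (S : Finset V) :
    ∑ v ∈ S, ls b S (b v) = S.card * ed b S - 2 * ∑ x ∈ S, dg b S x ^ 2 + 2 * tr b S := by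
  have : ∑ v ∈ S, ls b S (b v) = ∑ v ∈ S, ∑ x ∈ S, ∑ y ∈ S,
      (ι (b x y) - ι (b x y) * ι (b v x) - ι (b x y) * ι (b v y)
        + 2 * (ι (b x y) * (ι (b v x) * ι (b v y)))) := by
    refine sum_congr rfl fun v _ => ?_
    refine sum_congr rfl fun x _ => ?_
    refine sum_congr rfl fun y _ => ?_
    cases b x y <;> cases b v x <;> cases b v y <;> norm_num [ι]
  rw [this]
  simp only [sum_add_distrib, sum_sub_distrib, ← mul_sum]
  rw [sum1, sum2 hb, sum3 hb, sum4 hb]; ring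

lemma moon {b : V → V → Bool} (hb : Good b) (S : Finset V) :
    0 ≤ S.card * ed b S - 2 * ∑ x ∈ S, dg b S x ^ 2 + tr b S := by
  have : 0 ≤ ∑ v ∈ S, ∑ x ∈ S, ∑ y ∈ S,
      (ι (b x y) - ι (b x y) * ι (b v x) - ι (b x y) * ι (b v y)
        + (ι (b x y) * (ι (b v x) * ι (b v y)))) := by
    refine sum_nonneg fun v _ => ?_
    refine sum_nonneg fun x _ => ?_
    refine sum_nonneg fun y _ => ?_
    cases b x y <;> cases b v x <;> cases b v y <;> norm_num [ι]
  simp only [sum_add_distrib, sum_sub_distrib] at this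
  rw [sum1, sum2 hb, sum3 hb, sum4 hb] at this; linarith

lemma cs_tr (b : V → V → Bool) (S : Finset V) :
    tr b S ^ 2 ≤ ed b S * ∑ x ∈ S, ∑ y ∈ S, ι (b x y) * cd b S x y ^ 2 := by
  have h := sum_mul_sq_le_sq_mul_sq (S ×ˢ S) (fun p => ι (b p.1 p.2))
    (fun p => ι (b p.1 p.2) * cd b S p.1 p.2)
  simp only [sum_product] at h
  simpa only [ed, tr, mul_pow, ← mul_assoc, ι_sq, sq (ι _)] using h

def n2 (b : V → V → Bool) (x y z v : V) : Bool :=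
  (b x v && b y v) || (b y v && b z v) || (b x v && b z v)

lemma ι_n2 {b : V → V → Bool} (hb : Good b) {x y z : V} (hxy : b x y) (hyz : b y z) (hxz : b x z)
    (v : V) : ι (n2 b x y z v) = ι (b x v) * ι (b y v) + ι (b y v) * ι (b z v)
      + ι (b x v) * ι (b z v) := by
  have := hb.k4 x y z v
  unfold n2
  revert this
  rw [hxy, hyz, hxz]
  cases b x v <;> cases b y v <;> cases b z v <;> norm_num [ι]

lemma sum_n2 {b : V → V → Bool} (hb : Good b) {x y z : V} (hxy : b x y) (hyz : b y z)
    (hxz : b x z) (S : Finset V) :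
    ∑ v ∈ S, ι (n2 b x y z v) = cd b S x y + cd b S y z + cd b S x z := by
  simp only [ι_n2 hb hxy hyz hxz, sum_add_distrib, cd]

lemma weighted {I : Type*} (T : Finset I) (w g : I → ℝ) (c : ℝ) (hw : ∀ i ∈ T, 0 ≤ w i)
    (hpos : 0 < ∑ i ∈ T, w i) (h : c * ∑ i ∈ T, w i ≤ ∑ i ∈ T, w i * g i) :
    ∃ i ∈ T, 0 < w i ∧ c ≤ g i := by
  by_contra hcon
  push Not at hcon
  obtain ⟨i, hi, hwi⟩ := exists_lt_of_sum_lt (s := T) (f := fun _ => (0:ℝ)) (g := w) (by simpa using hpos)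
  have : ∑ i ∈ T, w i * g i < ∑ i ∈ T, c * w i := by
    refine sum_lt_sum (fun j hj => ?_) ⟨i, hi, ?_⟩
    · rcases (hw j hj).eq_or_lt with h0 | h0
      · simp [← h0]
      · nlinarith [hcon j hj h0]
    · nlinarith [hcon i hi hwi]
  rw [← mul_sum] at this
  linarith

lemma triangle {b : V → V → Bool} (hb : Good b) (S : Finset V) (hW : 0 < tr b S)
    (hD : 0 < ed b S) : ∃ x y z, x ∈ S ∧ b x y ∧ b y z ∧ b x z ∧
      3 * tr b S ≤ ed b S * ∑ v ∈ S, ι (n2 b x y z v) := by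
  have hsw : ∑ i ∈ S ×ˢ S ×ˢ S, ι (b i.1 i.2.1) * ι (b i.2.1 i.2.2) * ι (b i.1 i.2.2)
      = tr b S := by
    simp only [sum_product]
    refine sum_congr rfl fun x _ => ?_
    refine sum_congr rfl fun y _ => ?_
    rw [cd, mul_sum]
    exact sum_congr rfl fun z _ => by ring
  set Q := ∑ x ∈ S, ∑ y ∈ S, ι (b x y) * cd b S x y ^ 2 with hQ
  have q1 : ∑ i ∈ S ×ˢ S ×ˢ S, ι (b i.1 i.2.1) * ι (b i.2.1 i.2.2) * ι (b i.1 i.2.2)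
      * cd b S i.1 i.2.1 = Q := by
    simp only [sum_product]
    refine sum_congr rfl fun x _ => ?_
    refine sum_congr rfl fun y _ => ?_
    rw [sq, ← mul_assoc]
    nth_rw 2 [cd]
    rw [mul_sum, sum_mul]
    exact sum_congr rfl fun z _ => by ring
  have q2 : ∑ i ∈ S ×ˢ S ×ˢ S, ι (b i.1 i.2.1) * ι (b i.2.1 i.2.2) * ι (b i.1 i.2.2)
      * cd b S i.1 i.2.2 = Q := by
    simp only [sum_product]
    refine sum_congr rfl fun x _ => ?_
    rw [sum_comm]
    refine sum_congr rfl fun y _ => ?_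
    rw [sq, ← mul_assoc]
    nth_rw 2 [cd]
    rw [mul_sum, sum_mul]
    exact sum_congr rfl fun z _ => by rw [hb.symm z y]; ring
  have q3 : ∑ i ∈ S ×ˢ S ×ˢ S, ι (b i.1 i.2.1) * ι (b i.2.1 i.2.2) * ι (b i.1 i.2.2)
      * cd b S i.2.1 i.2.2 = Q := by
    simp only [sum_product]
    rw [sum_comm]
    refine sum_congr rfl fun x _ => ?_
    rw [sum_comm]
    refine sum_congr rfl fun y _ => ?_
    rw [sq, ← mul_assoc]
    nth_rw 2 [cd]
    rw [mul_sum, sum_mul]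
    exact sum_congr rfl fun z _ => by rw [hb.symm z x, hb.symm z y]; ring
  have hcs := cs_tr b S
  rw [← hQ] at hcs
  obtain ⟨⟨x, y, z⟩, hi, hw, hg⟩ := weighted (S ×ˢ S ×ˢ S)
    (fun i => ι (b i.1 i.2.1) * ι (b i.2.1 i.2.2) * ι (b i.1 i.2.2))
    (fun i => cd b S i.1 i.2.1 + cd b S i.2.1 i.2.2 + cd b S i.1 i.2.2)
    (3 * tr b S / ed b S)
    (fun i _ => mul_nonneg (mul_nonneg (ι_nonneg _) (ι_nonneg _)) (ι_nonneg _))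
    (by rw [hsw]; exact hW)
    (by
      simp only [mul_add, sum_add_distrib]
      rw [hsw, q1, q2, q3, div_mul_eq_mul_div, div_le_iff₀ hD]
      nlinarith)
  simp only at hw hg
  have hb3 : b x y = true ∧ b y z = true ∧ b x z = true := by
    revert hw
    cases b x y <;> cases b y z <;> cases b x z <;> simp [ι]
  obtain ⟨h1, h2, h3⟩ := hb3
  refine ⟨x, y, z, (mem_product.1 hi).1, h1, h2, h3, ?_⟩
  rw [sum_n2 hb h1 h2 h3]
  rw [div_le_iff₀ hD] at hg
  linarith

lemma tr_nonneg (b : V → V → Bool) (S : Finset V) : 0 ≤ tr b S :=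
  sum_nonneg fun _ _ => sum_nonneg fun _ _ => mul_nonneg (ι_nonneg _)
    (sum_nonneg fun _ _ => mul_nonneg (ι_nonneg _) (ι_nonneg _))

lemma ed_nonneg (b : V → V → Bool) (S : Finset V) : 0 ≤ ed b S :=
  sum_nonneg fun _ _ => sum_nonneg fun _ _ => ι_nonneg _

lemma turan {b : V → V → Bool} (hb : Good b) (S : Finset V) :
    3 * ed b S ≤ 2 * (S.card : ℝ) ^ 2 := by
  rcases (ed_nonneg b S).eq_or_lt with h0 | hD
  · rw [← h0]; simp only [mul_zero]; positivity
  have hn : (0:ℝ) < S.card := by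
    rcases S.eq_empty_or_nonempty with h | h
    · simp [h, ed] at hD
    · exact_mod_cast h.card_pos
  have h1 : 3 * tr b S ≤ ed b S * S.card := by
    rcases (tr_nonneg b S).eq_or_lt with h0 | hW
    · rw [← h0]; simp only [mul_zero]; positivity
    · obtain ⟨x, y, z, -, -, -, -, h⟩ := triangle hb S hW hD
      refine h.trans (mul_le_mul_of_nonneg_left ?_ hD.le)
      have := sum_le_card_nsmul S (fun v => ι (n2 b x y z v)) 1 (fun v _ => ι_le _)
      simpa using this
  have h2 := moon hb S
  have h3 := cs_dg b S
  have h4 : 6 * ed b S ^ 2 ≤ 4 * (S.card : ℝ)^2 * ed b S := by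
    nlinarith
  nlinarith

lemma ed_R (b : V → V → Bool) (S : Finset V) (ρ : V → Bool) :
    ed b (S.filter (fun v => ρ v = true)) = ∑ x ∈ S, ∑ y ∈ S, ι (b x y) * (ι (ρ x) * ι (ρ y)) := by
  unfold ed
  rw [sum_filter]
  refine sum_congr rfl fun x _ => ?_
  rw [sum_filter]
  cases hx : ρ x
  · simp [ι]
  · simp only [if_true]
    refine sum_congr rfl fun y _ => ?_
    cases hy : ρ y <;> simp [ι]

lemma ls_R (b : V → V → Bool) (S : Finset V) (ρ : V → Bool) (f : V → Bool) :
    ls b (S.filter (fun v => ρ v = true)) f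
      = ∑ x ∈ S, ∑ y ∈ S, ι (b x y) * (ι (ρ x) * ι (ρ y) * ι (f x == f y)) := by
  unfold ls
  rw [sum_filter]
  refine sum_congr rfl fun x _ => ?_
  rw [sum_filter]
  cases hx : ρ x
  · simp [ι]
  · simp only [if_true]
    refine sum_congr rfl fun y _ => ?_
    cases hy : ρ y <;> simp [ι]

/-- Pointwise bound for the three cuts with the remainder on one side. -/
lemma point4 (e p q s p' q' s' : Bool) (h1 : (p && q && s) = false) (h2 : (p' && q' && s') = false)
    (k1 : (e && p && q && p' && q') = false) (k2 : (e && q && s && q' && s') = false)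
    (k3 : (e && p && s && p' && s') = false) :
    ι e * ι ((((p && q) || (q && s) || (p && s)) && p) == (((p' && q') || (q' && s') || (p' && s')) && p'))
    + ι e * ι ((((p && q) || (q && s) || (p && s)) && q) == (((p' && q') || (q' && s') || (p' && s')) && q'))
    + ι e * ι ((((p && q) || (q && s) || (p && s)) && s) == (((p' && q') || (q' && s') || (p' && s')) && s'))
    ≤ ι e + 2 * (ι e * (ι (!((p && q) || (q && s) || (p && s)))
        * ι (!((p' && q') || (q' && s') || (p' && s'))))) := by
  revert h1 h2 k1 k2 k3
  cases e <;> cases p <;> cases q <;> cases s <;> cases p' <;> cases q' <;> cases s' <;>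
    norm_num [ι]

/-- Pointwise bound for the six cuts with the remainder split. -/
lemma point5 (e p q s p' q' s' f f' : Bool) (h1 : (p && q && s) = false)
    (h2 : (p' && q' && s') = false)
    (k1 : (e && p && q && p' && q') = false) (k2 : (e && q && s && q' && s') = false)
    (k3 : (e && p && s && p' && s') = false) (m m' : Bool)
    (hm : m = ((p && q) || (q && s) || (p && s)))
    (hm' : m' = ((p' && q') || (q' && s') || (p' && s'))) :
    ι e * ι (cond m p f == cond m' p' f') + ι e * ι (cond m p (!f) == cond m' p' (!f'))
    + (ι e * ι (cond m q f == cond m' q' f') + ι e * ι (cond m q (!f) == cond m' q' (!f')))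
    + (ι e * ι (cond m s f == cond m' s' f') + ι e * ι (cond m s (!f) == cond m' s' (!f')))
    ≤ 3 * ι e - 3 * (ι e * (ι (!m) * ι (!m'))) + 6 * (ι e * (ι (!m) * ι (!m') * ι (f == f'))) := by
  subst hm hm'
  revert h1 h2 k1 k2 k3
  cases e
  · simp [ι]
  cases p <;> cases q <;> cases s <;> cases p' <;> cases q' <;> cases s' <;>
    first
    | (simp; done)
    | (cases f <;> cases f' <;> norm_num [ι])

lemma kk {b : V → V → Bool} (hb : Good b) {x y : V} (hxy : b x y) (u v : V) :
    (b u v && b x u && b y u && b x v && b y v) = false := by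
  have := hb.k4 x y u v
  rw [hxy] at this
  revert this
  cases b u v <;> cases b x u <;> cases b y u <;> cases b x v <;> cases b y v <;> simp

lemma kt {b : V → V → Bool} (hb : Good b) {x y z : V} (hxy : b x y) (hyz : b y z) (hxz : b x z)
    (u : V) : (b x u && b y u && b z u) = false := by
  have := hb.k4 x y z u
  rw [hxy, hyz, hxz] at this
  simpa using this

lemma cut4 {b : V → V → Bool} (hb : Good b) {x y z : V} (hxy : b x y) (hyz : b y z) (hxz : b x z)
    (S : Finset V) :
    ls b S (fun v => n2 b x y z v && b x v) + ls b S (fun v => n2 b x y z v && b y v)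
      + ls b S (fun v => n2 b x y z v && b z v)
    ≤ ed b S + 2 * ed b (S.filter (fun v => (!n2 b x y z v) = true)) := by
  rw [ed_R b S (fun v => !n2 b x y z v)]
  simp only [ls, ed, mul_sum, ← sum_add_distrib]
  refine sum_le_sum fun u _ => sum_le_sum fun v _ => ?_
  exact point4 _ _ _ _ _ _ _ (kt hb hxy hyz hxz u) (kt hb hxy hyz hxz v)
    (kk hb hxy u v) (kk hb hyz u v) (kk hb hxz u v)

lemma cut5 {b : V → V → Bool} (hb : Good b) {x y z : V} (hxy : b x y) (hyz : b y z) (hxz : b x z)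
    (S : Finset V) (f : V → Bool) :
    ls b S (fun v => cond (n2 b x y z v) (b x v) (f v))
      + ls b S (fun v => cond (n2 b x y z v) (b x v) (!f v))
      + (ls b S (fun v => cond (n2 b x y z v) (b y v) (f v))
      + ls b S (fun v => cond (n2 b x y z v) (b y v) (!f v)))
      + (ls b S (fun v => cond (n2 b x y z v) (b z v) (f v))
      + ls b S (fun v => cond (n2 b x y z v) (b z v) (!f v)))
    ≤ 3 * ed b S - 3 * ed b (S.filter (fun v => (!n2 b x y z v) = true))
      + 6 * ls b (S.filter (fun v => (!n2 b x y z v) = true)) f := by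
  rw [ed_R b S (fun v => !n2 b x y z v), ls_R b S (fun v => !n2 b x y z v)]
  simp only [ls, ed, mul_sum, ← sum_add_distrib, ← sum_sub_distrib]
  refine sum_le_sum fun u _ => sum_le_sum fun v _ => ?_
  exact point5 _ _ _ _ _ _ _ _ _ (kt hb hxy hyz hxz u) (kt hb hxy hyz hxz v)
    (kk hb hxy u v) (kk hb hyz u v) (kk hb hxz u v) _ _ rfl rfl

lemma card_R (b : V → V → Bool) (x y z : V) (S : Finset V) :
    ((S.filter (fun v => (!n2 b x y z v) = true)).card : ℝ)
      = S.card - ∑ v ∈ S, ι (n2 b x y z v) := by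
  rw [card_filter, Nat.cast_sum, eq_sub_iff_add_eq, ← sum_add_distrib, card_eq_sum_ones,
    Nat.cast_sum]
  refine sum_congr rfl fun v _ => ?_
  cases n2 b x y z v <;> simp [ι]

theorem main {b : V → V → Bool} (hb : Good b) (S : Finset V) :
    ∃ f, ls b S f ≤ 2 * (S.card : ℝ) ^ 2 / 9 := by
  induction S using Finset.strongInduction with
  | H S ih =>
    by_contra hcon
    push Not at hcon
    have hn : (0:ℝ) < S.card := by
      rcases S.eq_empty_or_nonempty with h | h
      · have := hcon (fun _ => true)
        simp [h, ls] at this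
      · exact_mod_cast h.card_pos
    set n : ℝ := (S.card : ℝ) with hn'
    have h0 : 4 * n^2 / 9 < ed b S := by
      obtain ⟨f, hf⟩ := half hb S
      linarith [hcon f]
    have hD : 0 < ed b S := lt_trans (by positivity) h0
    have h1 := turan hb S
    rw [← hn'] at h1
    have h2 : n * (2 * n^2 / 9) < n * ed b S - 2 * ∑ x ∈ S, dg b S x ^ 2 + 2 * tr b S := by
      have hne : S.Nonempty := by
        rw [hn'] at hn; rw [← card_pos]; exact_mod_cast hn
      have h := sum_lt_sum_of_nonempty hne fun v _ => hcon (b v)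
      rw [cutN hb S, sum_const, nsmul_eq_mul] at h
      exact h
    have h3 := cs_dg b S
    rw [← hn'] at h3
    have hW : n^3/9 - n * ed b S / 2 + ed b S ^ 2 / n < tr b S := by
      have : ed b S ^ 2 / n ≤ ∑ x ∈ S, dg b S x ^ 2 := by
        rw [div_le_iff₀ hn]; linarith
      nlinarith
    have hWpos : 0 < tr b S := by
      refine lt_trans ?_ hW
      have : n^3/9 - n * ed b S / 2 + ed b S ^ 2 / n
        = ((ed b S - n^2/4)^2 + 7/144 * n^4) / n := by field_simp; ring
      rw [this]; positivity
    obtain ⟨x, y, z, hx, hxy, hyz, hxz, ht⟩ := triangle hb S hWpos hD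
    have hcard := card_R b x y z S
    rw [← hn'] at hcard
    set R := S.filter (fun v => (!n2 b x y z v) = true) with hR
    have hRS : R ⊂ S := by
      rw [hR, filter_ssubset]
      refine ⟨x, hx, ?_⟩
      rw [hb.symm x y] at hxy
      rw [hb.symm x z] at hxz
      simp [n2, hxy, hxz]
    obtain ⟨f, hf⟩ := ih R hRS
    have h4 := cut4 hb hxy hyz hxz S
    have h5 := cut5 hb hxy hyz hxz S f
    rw [← hR] at h4 h5
    have hc := turan hb R
    have hr : (0:ℝ) ≤ R.card := by positivity
    have h4' : 2/3 * n^2 < ed b S + 2 * ed b R := by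
      linarith [hcon (fun v => n2 b x y z v && b x v), hcon (fun v => n2 b x y z v && b y v),
        hcon (fun v => n2 b x y z v && b z v)]
    have h5' : 4/3 * n^2 < 3 * ed b S - 3 * ed b R + 4/3 * (R.card:ℝ)^2 := by
      linarith [hcon (fun v => cond (n2 b x y z v) (b x v) (f v)),
        hcon (fun v => cond (n2 b x y z v) (b x v) (!f v)),
        hcon (fun v => cond (n2 b x y z v) (b y v) (f v)),
        hcon (fun v => cond (n2 b x y z v) (b y v) (!f v)),
        hcon (fun v => cond (n2 b x y z v) (b z v) (f v)),
        hcon (fun v => cond (n2 b x y z v) (b z v) (!f v))]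
    have ht' : 3 * tr b S ≤ (n - R.card) * ed b S := by
      rw [hcard]; linarith
    clear_value R
    generalize (R.card : ℝ) = r at *
    generalize ed b R = c at *
    generalize ed b S = D at *
    generalize tr b S = W at *
    have hn2 : 0 < n^2 := by positivity
    have hn3 : 0 < n^3 := by positivity
    apply numeric (D / n^2) (W / n^3) (r / n) (c / n^2)
    · rw [lt_div_iff₀ hn2]; linarith
    · rw [div_le_iff₀ hn2]; linarith
    · rw [lt_div_iff₀ hn3]
      refine lt_of_eq_of_lt ?_ hW
      field_simp
    · have e : (1 - r/n) * (D / n^2) = ((n - r) * D) / n^3 := by field_simp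
      rw [e, ← mul_div_assoc, div_le_div_iff_of_pos_right hn3]
      exact ht'
    · have e : D / n^2 + 2 * (c / n^2) = (D + 2 * c) / n^2 := by field_simp
      rw [e, lt_div_iff₀ hn2]; exact h4'
    · have e : 3 * (D / n^2) - 3 * (c / n^2) + 4/3 * (r/n)^2 = (3*D - 3*c + 4/3*r^2) / n^2 := by
        field_simp
      rw [e, lt_div_iff₀ hn2]; exact h5'
    · have e : 2 * (r/n)^2 = (2*r^2) / n^2 := by field_simp
      rw [e, ← mul_div_assoc, div_le_div_iff_of_pos_right hn2]; exact hc
    · positivity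

end K4

open Classical in
/-- Every `K₄`-free graph on `n` vertices can be made bipartite by removing
at most `n² / 9` edges. -/
theorem k4free_bipartite_distance (n : ℕ) (G : SimpleGraph (Fin n))
    [DecidableRel G.Adj] (hG : G.CliqueFree 4) :
    ∃ S : Finset (Fin n),
      ((G.edgeFinset.filter
        (fun e => (∀ v ∈ e, v ∈ S) ∨ (∀ v ∈ e, v ∉ S))).card : ℝ) ≤ n ^ 2 / 9 := by
  have hb : K4.Good (fun x y : Fin n => decide (G.Adj x y)) := by
    refine ⟨fun x y => by simp [G.adj_comm], fun x => by simp, fun x y z w => ?_⟩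
    by_contra hcon
    simp only [Bool.not_eq_false, Bool.and_eq_true, decide_eq_true_eq] at hcon
    obtain ⟨⟨⟨⟨⟨h1, h2⟩, h3⟩, h4⟩, h5⟩, h6⟩ := hcon
    refine hG {x, y, z, w} ?_
    have e : G.IsNClique 3 {y, z, w} := SimpleGraph.is3Clique_triple_iff.2 ⟨h4, h5, h6⟩
    refine e.insert ?_
    intro v hv
    simp only [Finset.mem_insert, Finset.mem_singleton] at hv
    rcases hv with rfl | rfl | rfl <;> assumption
  obtain ⟨f, hf⟩ := K4.main hb Finset.univ
  refine ⟨Finset.univ.filter (fun v => f v = true), ?_⟩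
  set H : SimpleGraph (Fin n) :=
    { Adj := fun x y => G.Adj x y ∧ f x = f y
      symm := ⟨fun x y h => ⟨h.1.symm, h.2.symm⟩⟩
      loopless := ⟨fun x h => G.loopless.irrefl x h.1⟩ } with hH
  have hE : G.edgeFinset.filter (fun e => (∀ v ∈ e, v ∈ Finset.univ.filter (fun v => f v = true))
      ∨ (∀ v ∈ e, v ∉ Finset.univ.filter (fun v => f v = true))) = H.edgeFinset := by
    ext e
    induction e using Sym2.ind with
    | _ x y =>
      simp only [Finset.mem_filter, SimpleGraph.mem_edgeFinset, SimpleGraph.mem_edgeSet,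
        Finset.mem_univ, true_and, Sym2.mem_iff, forall_eq_or_imp, forall_eq, hH]
      cases f x <;> cases f y <;> simp
  have hs : K4.ls (fun x y : Fin n => decide (G.Adj x y)) Finset.univ f
      = 2 * (H.edgeFinset.card : ℝ) := by
    have h := H.sum_degrees_eq_twice_card_edges
    have h' : (∑ v, (H.degree v : ℝ)) = 2 * (H.edgeFinset.card : ℝ) := by exact_mod_cast h
    rw [← h', K4.ls]
    refine Finset.sum_congr rfl fun x _ => ?_
    rw [← SimpleGraph.card_neighborFinset_eq_degree, SimpleGraph.neighborFinset_eq_filter,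
      Finset.card_filter, Nat.cast_sum]
    refine Finset.sum_congr rfl fun y _ => ?_
    by_cases h1 : G.Adj x y <;> by_cases h2 : f x = f y <;> simp [h1, h2, hH, K4.ι, beq_eq_decide]
  rw [hE]
  rw [hs, Finset.card_univ, Fintype.card_fin] at hf
  linarith
end

section
/- Every K_4-free graph G on n vertices contains a set S of ⌊n/2⌋ vertices such that the number of edges of G with both endpoints in S is at most n^2/18. -/
namespace SparseHalf

/-- Arithmetic expressions used by the interval branch and bound procedure. -/
inductive Ex where
  | k : ℕ → Ex
  | v : ℕ → Ex
  | add : Ex → Ex → Ex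
  | sub : Ex → Ex → Ex
  | mul : Ex → Ex → Ex

/-- fixed point scale -/
def sc : ℕ := 1073741824

noncomputable def getv (b : List (ℕ × ℕ)) (i : ℕ) (u : Bool) : ℕ :=
  List.rec (motive := fun _ => ℕ → ℕ) (fun _ => 0)
    (fun p _ ih i => Nat.rec (Bool.rec p.1 p.2 u) (fun j _ => ih j) i) b i

/-- bound of an expression on a box; `true` is the upper bound -/
noncomputable def iev (b : List (ℕ × ℕ)) (e : Ex) : Bool → ℕ :=
  Ex.rec (motive := fun _ => Bool → ℕ)
    (fun n _ => Nat.mul n sc)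
    (fun i u => getv b i u)
    (fun _ _ f g u => Nat.add (f u) (g u))
    (fun _ _ f g u => Nat.sub (f u) (g (Bool.rec true false u)))
    (fun _ _ f g u => Nat.add (Nat.div (Nat.mul (f u) (g u)) sc) (Bool.rec 0 1 u)) e

noncomputable def refuted (b : List (ℕ × ℕ)) (cs : List (Ex × Ex)) : Bool :=
  List.rec (motive := fun _ => Bool) false
    (fun c _ ih => Bool.rec ih true (Nat.blt (iev b c.2 true) (iev b c.1 false))) cs

noncomputable def splitb (u : Bool) (b : List (ℕ × ℕ)) (i : ℕ) : List (ℕ × ℕ) :=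
  List.rec (motive := fun _ => ℕ → List (ℕ × ℕ)) (fun _ => [])
    (fun p l ih i => Nat.rec
      (Bool.rec (p.1, Nat.div (Nat.add p.1 p.2) 2) (Nat.div (Nat.add p.1 p.2) 2, p.2) u :: l)
      (fun j _ => p :: ih j) i) b i

noncomputable def chk (cs : List (Ex × Ex)) (m n : ℕ) : List (ℕ × ℕ) → Bool :=
  Nat.rec (motive := fun _ => List (ℕ × ℕ) → Bool) (fun b => refuted b cs)
    (fun n ih b => Bool.rec
      (Bool.rec false (ih (splitb true b (Nat.mod n m))) (ih (splitb false b (Nat.mod n m))))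
      true (refuted b cs)) n

def getr : List ℝ → ℕ → ℝ
  | [], _ => 0
  | x :: _, 0 => x
  | _ :: l, i + 1 => getr l i

/-- real value of an expression -/
noncomputable def den (w : List ℝ) : Ex → ℝ
  | .k n => n
  | .v i => getr w i
  | .add x y => den w x + den w y
  | .sub x y => den w x - den w y
  | .mul x y => den w x * den w y

/-- all subtractions in the expression are nonnegative -/
def okx (w : List ℝ) : Ex → Prop
  | .k _ => True
  | .v _ => True
  | .add x y => okx w x ∧ okx w y
  | .sub x y => okx w x ∧ okx w y ∧ den w y ≤ den w x
  | .mul x y => okx w x ∧ okx w y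

def inBox : List (ℕ × ℕ) → List ℝ → Prop
  | [], [] => True
  | [], _ :: _ => False
  | _ :: _, [] => False
  | p :: l, x :: w => ((p.1 : ℝ) ≤ sc * x ∧ sc * x ≤ (p.2 : ℝ)) ∧ inBox l w

def holds (w : List ℝ) : List (Ex × Ex) → Prop
  | [] => True
  | c :: cs => (okx w c.1 ∧ okx w c.2 ∧ den w c.1 ≤ den w c.2) ∧ holds w cs

theorem getv_bound : ∀ (b : List (ℕ × ℕ)) (w : List ℝ) (i : ℕ), inBox b w →
    (getv b i false : ℝ) ≤ sc * getr w i ∧ sc * getr w i ≤ (getv b i true : ℝ) := by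
  intro b
  induction b with
  | nil =>
    intro w i h
    cases w with
    | nil => simp [getv, getr]
    | cons x w => exact absurd h (by simp [inBox])
  | cons p l ih =>
    intro w i h
    cases w with
    | nil => exact absurd h (by simp [inBox])
    | cons x w =>
      obtain ⟨h1, h2⟩ := h
      cases i with
      | zero => exact h1
      | succ j => exact ih w j h2

theorem sc_pos : (0 : ℝ) < (sc : ℝ) := by norm_num [sc]

theorem iev_bound (b : List (ℕ × ℕ)) (w : List ℝ) (hb : inBox b w) (e : Ex) : okx w e →
    (iev b e false : ℝ) ≤ sc * den w e ∧ sc * den w e ≤ (iev b e true : ℝ) := by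
  induction e with
  | k n =>
    intro _
    have : iev b (.k n) = fun _ => n * sc := rfl
    rw [this]; simp only [den]; push_cast
    constructor <;> linarith [mul_comm (n : ℝ) (sc : ℝ)]
  | v i => intro _; exact getv_bound b w i hb
  | add x y ihx ihy =>
    rintro ⟨hx, hy⟩
    have : ∀ u, iev b (.add x y) u = iev b x u + iev b y u := fun _ => rfl
    rw [this, this]; simp only [den]; push_cast
    have := ihx hx; have := ihy hy
    constructor <;> linarith
  | sub x y ihx ihy =>
    rintro ⟨hx, hy, hxy⟩
    have h1 : iev b (.sub x y) true = iev b x true - iev b y false := rfl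
    have h2 : iev b (.sub x y) false = iev b x false - iev b y true := rfl
    rw [h1, h2]; simp only [den]
    obtain ⟨a1, a2⟩ := ihx hx
    obtain ⟨b1, b2⟩ := ihy hy
    have hs := sc_pos
    constructor
    · rcases le_total (iev b y true) (iev b x false) with h | h
      · rw [Nat.cast_sub h]; linarith
      · rw [Nat.sub_eq_zero_of_le h]
        push_cast
        exact mul_nonneg hs.le (by linarith)
    · have : ((iev b x true : ℕ) : ℝ) ≤ ((iev b x true - iev b y false : ℕ) : ℝ) + (iev b y false : ℕ) := by
        exact_mod_cast (by omega)
      linarith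
  | mul x y ihx ihy =>
    rintro ⟨hx, hy⟩
    have h1 : iev b (.mul x y) true = (iev b x true * iev b y true) / sc + 1 := rfl
    have h2 : iev b (.mul x y) false = (iev b x false * iev b y false) / sc := rfl
    rw [h1, h2]; simp only [den]
    obtain ⟨a1, a2⟩ := ihx hx
    obtain ⟨b1, b2⟩ := ihy hy
    have hs := sc_pos
    have hx0 : 0 ≤ sc * den w x := le_trans (Nat.cast_nonneg _) a1
    have hy0 : 0 ≤ sc * den w y := le_trans (Nat.cast_nonneg _) b1
    constructor
    · have h3 : (((iev b x false * iev b y false) / sc : ℕ) : ℝ) ≤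
          ((iev b x false * iev b y false : ℕ) : ℝ) / sc := Nat.cast_div_le
      refine h3.trans ?_
      rw [div_le_iff₀ hs]; push_cast
      calc (iev b x false : ℝ) * iev b y false ≤ (sc * den w x) * (sc * den w y) :=
            mul_le_mul a1 b1 (Nat.cast_nonneg _) hx0
        _ = _ := by ring
    · have h3 : iev b x true * iev b y true ≤ ((iev b x true * iev b y true) / sc + 1) * sc := by
        have := Nat.lt_div_mul_add (a := iev b x true * iev b y true) (b := sc) (by norm_num [sc])
        rw [add_mul]; omega
      have h4 : (iev b x true : ℝ) * iev b y true ≤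
          (((iev b x true * iev b y true) / sc + 1 : ℕ) : ℝ) * sc := by exact_mod_cast h3
      have h5 : (sc * den w x) * (sc * den w y) ≤ (iev b x true : ℝ) * iev b y true :=
        mul_le_mul a2 b2 hy0 (Nat.cast_nonneg _)
      have h6 : (sc * (den w x * den w y)) * sc ≤
        (((iev b x true * iev b y true) / sc + 1 : ℕ) : ℝ) * sc := by
        calc _ = (sc * den w x) * (sc * den w y) := by ring
          _ ≤ _ := h5.trans h4
      exact le_of_mul_le_mul_right h6 hs

theorem refuted_sound (b : List (ℕ × ℕ)) (w : List ℝ) (hb : inBox b w) (cs : List (Ex × Ex)) :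
    refuted b cs = true → holds w cs → False := by
  induction cs with
  | nil => intro h; exact absurd h (by simp [refuted])
  | cons c cs ih =>
    intro h hc
    obtain ⟨⟨o1, o2, hle⟩, hcs⟩ := hc
    have : refuted b (c :: cs) =
      Bool.rec (refuted b cs) true (Nat.blt (iev b c.2 true) (iev b c.1 false)) := rfl
    rw [this] at h
    cases hB : Nat.blt (iev b c.2 true) (iev b c.1 false) with
    | false => rw [hB] at h; exact ih h hcs
    | true =>
      have h1 : iev b c.2 true < iev b c.1 false := by simpa [Nat.blt_eq] using hB
      have h2 : (iev b c.2 true : ℝ) < iev b c.1 false := by exact_mod_cast h1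
      have := (iev_bound b w hb c.1 o1).1
      have := (iev_bound b w hb c.2 o2).2
      have := mul_le_mul_of_nonneg_left hle sc_pos.le
      linarith

theorem splitb_sound : ∀ (b : List (ℕ × ℕ)) (w : List ℝ) (i : ℕ), inBox b w →
    inBox (splitb true b i) w ∨ inBox (splitb false b i) w := by
  intro b
  induction b with
  | nil => intro w i h; left; exact h
  | cons p l ih =>
    intro w i h
    cases w with
    | nil => exact absurd h (by simp [inBox])
    | cons x w =>
      obtain ⟨h1, h2⟩ := h
      cases i with
      | zero =>
        rcases le_total (((p.1 + p.2) / 2 : ℕ) : ℝ) (sc * x) with h | h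
        · left; exact ⟨⟨h, h1.2⟩, h2⟩
        · right; exact ⟨⟨h1.1, h⟩, h2⟩
      | succ j =>
        rcases ih w j h2 with h | h
        · left; exact ⟨h1, h⟩
        · right; exact ⟨h1, h⟩

theorem chk_sound (cs : List (Ex × Ex)) (m n : ℕ) (w : List ℝ) : ∀ (b : List (ℕ × ℕ)),
    chk cs m n b = true → inBox b w → holds w cs → False := by
  induction n with
  | zero => intro b h hb hc; exact refuted_sound b w hb cs h hc
  | succ n ih =>
    intro b h hb hc
    have hd : chk cs m (n + 1) b = Bool.rec
      (Bool.rec false (chk cs m n (splitb true b (n % m))) (chk cs m n (splitb false b (n % m))))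
      true (refuted b cs) := rfl
    rw [hd] at h
    cases hB : refuted b cs with
    | true => exact refuted_sound b w hb cs hB hc
    | false =>
      rw [hB] at h
      cases hC : chk cs m n (splitb false b (n % m)) with
      | false => simp [hC] at h
      | true =>
        simp only [hC] at h
        rcases splitb_sound b w (n % m) hb with h' | h'
        · exact ih _ h h' hc
        · exact ih _ hC h' hc

local infixl:65 "∔" => Ex.add
local infixl:65 "∸" => Ex.sub
local infixl:70 "⊡" => Ex.mul

section pisec
open Ex

/-- constraint system for the pointwise inequality; variables `e, z, x, k` -/
def csPB : List (Ex × Ex) :=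
  let e := v 0
  let z := v 1
  let x := v 2
  let j := v 3
  let G := e ⊡ (k 1 ∸ k 3 ⊡ e)
  let N := k 2 ∸ k 3 ⊡ (e ∔ z)
  let q := k 1 ∔ k 3 ⊡ e ∸ k 3 ⊡ z
  let y := k 2 ∔ k 3 ⊡ z ∔ k 6 ⊡ j ∸ k 3 ⊡ e
  let l := (k 312 ∔ k 396 ⊡ e) ⊡ x ∔ (k 5 ∸ k 30 ⊡ e) ⊡ y ∔ (k 93 ∔ k 9 ⊡ e) ⊡ z ∔ k 180 ⊡ e
  let r := q ⊡ (x ⊡ y ∔ k 12 ⊡ j ⊡ j)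
  [(k 60 ⊡ z, k 61 ⊡ G), (k 12 ⊡ x, y), (k 20, l), (r, N ⊡ G),
   (k 270 ⊡ e ⊡ e ⊡ (k 1 ∸ k 2 ⊡ z) ⊡ (k 2 ∸ (k 3 ⊡ e ∔ k 9 ⊡ z ∔ k 12 ⊡ x ∔ k 6 ⊡ j)),
    (l ∸ k 20) ⊡ (N ⊡ G ∸ r))]

def csPA : List (Ex × Ex) :=
  let e := v 0
  let z := v 1
  let x := v 2
  let j := v 3
  let G := e ⊡ (k 1 ∸ k 3 ⊡ e)
  let N := k 2 ∸ k 3 ⊡ (e ∔ z)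
  let q := k 1 ∔ k 3 ⊡ e ∸ k 3 ⊡ z
  let y := k 2 ∔ k 3 ⊡ z ∸ (k 3 ⊡ e ∔ k 12 ⊡ j)
  let l := (k 312 ∔ k 396 ⊡ e) ⊡ x ∔ (k 5 ∸ k 30 ⊡ e) ⊡ y ∔ (k 93 ∔ k 9 ⊡ e) ⊡ z ∔ k 180 ⊡ e
  let r := q ⊡ (x ⊡ y)
  [(k 60 ⊡ z, k 61 ⊡ G), (k 12 ⊡ x, y), (k 20, l), (r, N ⊡ G),
   (k 270 ⊡ e ⊡ e ⊡ (k 1 ∸ k 2 ⊡ z) ⊡ (k 2 ∔ k 12 ⊡ j ∸ (k 3 ⊡ e ∔ k 9 ⊡ z ∔ k 12 ⊡ x)),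
    (l ∸ k 20) ⊡ (N ⊡ G ∸ r))]

def boxPA : List (ℕ × ℕ) := [(0, 178956971), (0, 96636765), (0, 214748365), (0, 214748365)]

theorem chkPA : chk csPA 4 28 boxPA = true := by decide +kernel
theorem chkPB : chk csPB 4 28 boxPA = true := by decide +kernel
end pisec

theorem pi_A (e z x j : ℝ) (he : 0 ≤ e) (he' : e ≤ 1 / 6) (hz : 0 ≤ z)
    (hz' : 60 * z ≤ 61 * (e * (1 - 3 * e))) (hx : 0 ≤ x) (hj : 0 ≤ j)
    (hxy : 12 * x ≤ 2 + 3 * z - (3 * e + 12 * j))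
    (hs : 3 * e + 9 * z + 12 * x ≤ 2 + 12 * j)
    (hl : 20 ≤ (312 + 396 * e) * x + (5 - 30 * e) * (2 + 3 * z - (3 * e + 12 * j))
      + (93 + 9 * e) * z + 180 * e)
    (hc : (1 + 3 * e - 3 * z) * (x * (2 + 3 * z - (3 * e + 12 * j))) ≤
      (2 - 3 * (e + z)) * (e * (1 - 3 * e))) :
    ((312 + 396 * e) * x + (5 - 30 * e) * (2 + 3 * z - (3 * e + 12 * j))
      + (93 + 9 * e) * z + 180 * e - 20) * ((2 - 3 * (e + z)) * (e * (1 - 3 * e))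
        - (1 + 3 * e - 3 * z) * (x * (2 + 3 * z - (3 * e + 12 * j)))) <
    270 * e * e * (1 - 2 * z) * (2 + 12 * j - (3 * e + 9 * z + 12 * x)) := by
  by_contra hcon
  push Not at hcon
  have hzb : z ≤ 9 / 100 := by nlinarith [sq_nonneg (e - 1 / 6)]
  refine chk_sound csPA 4 28 [e, z, x, j] boxPA chkPA ?_ ?_
  · simp only [inBox, boxPA, sc]
    push_cast
    refine ⟨⟨?_, ?_⟩, ⟨?_, ?_⟩, ⟨?_, ?_⟩, ⟨?_, ?_⟩, trivial⟩ <;> linarith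
  · simp only [holds, csPA, okx, den, getr, true_and, and_true]
    push_cast
    repeat' apply And.intro
    all_goals linarith

theorem pi_B (e z x j : ℝ) (he : 0 ≤ e) (he' : e ≤ 1 / 6) (hz : 0 ≤ z)
    (hz' : 60 * z ≤ 61 * (e * (1 - 3 * e))) (hx : 0 ≤ x) (hj : 0 ≤ j)
    (hxy : 12 * x ≤ 2 + 3 * z + 6 * j - 3 * e)
    (hs : 3 * e + 9 * z + 12 * x + 6 * j ≤ 2)
    (hl : 20 ≤ (312 + 396 * e) * x + (5 - 30 * e) * (2 + 3 * z + 6 * j - 3 * e)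
      + (93 + 9 * e) * z + 180 * e)
    (hc : (1 + 3 * e - 3 * z) * (x * (2 + 3 * z + 6 * j - 3 * e) + 12 * j * j) ≤
      (2 - 3 * (e + z)) * (e * (1 - 3 * e))) :
    ((312 + 396 * e) * x + (5 - 30 * e) * (2 + 3 * z + 6 * j - 3 * e)
      + (93 + 9 * e) * z + 180 * e - 20) * ((2 - 3 * (e + z)) * (e * (1 - 3 * e))
        - (1 + 3 * e - 3 * z) * (x * (2 + 3 * z + 6 * j - 3 * e) + 12 * j * j)) <
    270 * e * e * (1 - 2 * z) * (2 - (3 * e + 9 * z + 12 * x + 6 * j)) := by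
  by_contra hcon
  push Not at hcon
  have hzb : z ≤ 9 / 100 := by nlinarith [sq_nonneg (e - 1 / 6)]
  have hG : e * (1 - 3 * e) ≤ 1 / 12 := by nlinarith [sq_nonneg (e - 1 / 6)]
  have hG0 : 0 ≤ e * (1 - 3 * e) := by apply mul_nonneg <;> linarith
  have hjb : j ≤ 1 / 5 := by
    by_contra hj'
    push Not at hj'
    have h1 : (0:ℝ) ≤ x * (2 + 3 * z + 6 * j - 3 * e) := by apply mul_nonneg <;> linarith
    have h2 : (12:ℝ) * (1 / 25) ≤ 12 * j * j := by nlinarith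
    have h3 : (73/100) * (12 * (1 / 25)) ≤ (1 + 3 * e - 3 * z) * (x * (2 + 3 * z + 6 * j - 3 * e) + 12 * j * j) := by
      apply mul_le_mul <;> linarith
    have h4 : (2 - 3 * (e + z)) * (e * (1 - 3 * e)) ≤ 2 * (1 / 12) := by
      apply mul_le_mul <;> linarith
    linarith
  refine chk_sound csPB 4 28 [e, z, x, j] boxPA chkPB ?_ ?_
  · simp only [inBox, boxPA, sc]
    push_cast
    refine ⟨⟨?_, ?_⟩, ⟨?_, ?_⟩, ⟨?_, ?_⟩, ⟨?_, ?_⟩, trivial⟩ <;> linarith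
  · simp only [holds, csPB, okx, den, getr, true_and, and_true]
    push_cast
    repeat' apply And.intro
    all_goals linarith

section n1sec
open Ex

def csN1a : List (Ex × Ex) :=
  let e := v 0
  let z := v 1
  let D := k 2 ∸ k 3 ⊡ e
  let G := e ⊡ (k 1 ∸ k 3 ⊡ e)
  let N := k 2 ∸ k 3 ⊡ (e ∔ z)
  let u := (k 1 ∸ k 2 ⊡ z) ⊡ (D ∸ k 6 ⊡ z)
  [(k 61 ⊡ G, k 60 ⊡ z), (k 10 ⊡ z, D), (k 3 ⊡ z ⊡ u, k 2 ⊡ N ⊡ G), (k 61 ⊡ u, k 40 ⊡ N)]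

def boxN1a : List (ℕ × ℕ) := [(0, 178956971), (0, 214748365)]

theorem chkN1a : chk csN1a 2 24 boxN1a = true := by decide +kernel

def csN1b : List (Ex × Ex) :=
  let e := v 0
  let z := v 1
  let s := v 2
  let D := k 2 ∸ k 3 ⊡ e
  let G := e ⊡ (k 1 ∸ k 3 ⊡ e)
  let N := k 2 ∸ k 3 ⊡ (e ∔ z)
  let q := k 1 ∔ k 3 ⊡ e ∸ k 3 ⊡ z
  let h := D ∸ k 6 ⊡ s
  let u := (k 1 ∸ k 2 ⊡ z) ⊡ (D ∸ k 6 ⊡ z)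
  let L := k 2187 ⊡ s ⊡ s ∔ k 243 ⊡ z ⊡ (D ∸ k 3 ⊡ z)
  let c := k 18 ⊡ z ⊡ (k 1 ∸ k 2 ⊡ z)
  [(k 61 ⊡ G, k 60 ⊡ z), (k 10 ⊡ z, D), (q ⊡ h, c), (L, k 17 ⊡ D ⊡ D),
   (k 729 ⊡ h ⊡ z ⊡ u, k 2 ⊡ (k 17 ⊡ D ⊡ D ∸ L) ⊡ (c ∸ q ⊡ h) ∔ k 486 ⊡ h ⊡ N ⊡ G)]

def boxN1b : List (ℕ × ℕ) := [(0, 178956971), (0, 214748365), (0, 214748365)]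

theorem chkN1b : chk csN1b 3 30 boxN1b = true := by decide +kernel

def csNc0 : List (Ex × Ex) :=
  let e := v 0
  let z := v 1
  let s := v 2
  let a := v 3
  let D := k 2 ∸ k 3 ⊡ e
  let G := e ⊡ (k 1 ∸ k 3 ⊡ e)
  let N := k 2 ∸ k 3 ⊡ (e ∔ z)
  let q := k 1 ∔ k 3 ⊡ e ∸ k 3 ⊡ z
  [(k 60 ⊡ z, k 61 ⊡ G), (k 2 ⊡ s, z ∔ k 2 ⊡ a), (k 2 ⊡ a, z ∔ k 2 ⊡ s), (k 1 ∔ k 3 ⊡ e, k 12 ⊡ s),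
   (k 2916 ⊡ (s ⊡ s ∔ a ⊡ a) ∔ k 243 ⊡ z ⊡ (D ∸ k 3 ⊡ z), k 17 ⊡ D ⊡ D ∔ k 2916 ⊡ s ⊡ a),
   ((k 1 ∸ k 2 ⊡ z) ⊡ (k 3 ⊡ z ⊡ (D ∸ k 6 ⊡ z ∸ k 6 ⊡ s)) ∔ k 24 ⊡ q ⊡ a ⊡ a, k 2 ⊡ N ⊡ G)]

def csNc1 : List (Ex × Ex) :=
  let e := v 0
  let z := v 1
  let s := v 2
  let a := v 3
  let D := k 2 ∸ k 3 ⊡ e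
  let G := e ⊡ (k 1 ∸ k 3 ⊡ e)
  let N := k 2 ∸ k 3 ⊡ (e ∔ z)
  let q := k 1 ∔ k 3 ⊡ e ∸ k 3 ⊡ z
  let h := D ∸ k 6 ⊡ s
  let c := k 18 ⊡ z ⊡ (k 1 ∸ k 2 ⊡ z)
  [(k 60 ⊡ z, k 61 ⊡ G), (k 2 ⊡ s, z ∔ k 2 ⊡ a), (k 2 ⊡ a, z ∔ k 2 ⊡ s), (k 1 ∔ k 3 ⊡ e, k 12 ⊡ s),
   (k 2916 ⊡ (s ⊡ s ∔ a ⊡ a) ∔ k 243 ⊡ z ⊡ (D ∸ k 3 ⊡ z), k 17 ⊡ D ⊡ D ∔ k 2916 ⊡ s ⊡ a),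
   (q ⊡ h, c),
   (k 5 ⊡ (k 1 ∸ k 2 ⊡ z) ⊡ (k 3 ⊡ z ⊡ (D ∸ k 6 ⊡ z ∸ k 6 ⊡ s)) ∔ k 120 ⊡ q ⊡ a ⊡ a,
     k 10 ⊡ N ⊡ G ∔ k 3 ⊡ (c ∸ q ⊡ h))]

def boxNc : List (ℕ × ℕ) := [(0, 178956971), (0, 96636765), (0, 214748365), (0, 268435456)]

theorem chkNc0 : chk csNc0 4 30 boxNc = true := by decide +kernel
theorem chkNc1 : chk csNc1 4 30 boxNc = true := by decide +kernel

end n1sec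

theorem n1_z (e z k s t : ℝ) (he : 0 ≤ e) (he' : e ≤ 1 / 6) (hz : 0 ≤ z)
    (hz' : 10 * z ≤ 2 - 3 * e) (hk : 0 ≤ k) (hkh : 0 < 2 - 3 * e - 6 * k) (hs : 2 * s ≤ z) (hs' : -z ≤ 2 * s)
    (ht : 0 ≤ t)
    (hM : 2916 * (k ^ 2 - k * s + s ^ 2) + 243 * z * (2 - 3 * e - 3 * z)
      + 243 * (2 - 3 * e - 6 * k) * t ≤ 17 * (2 - 3 * e) ^ 2)
    (hS : 6 * (2 - 3 * (e + z)) * z * (1 - 2 * z) + 2 * (1 + 3 * e - 3 * z) * (2 - 3 * e - 6 * k) * t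
       + 24 * (1 + 3 * e - 3 * z) * (k - s) ^ 2 ≤ 2 * (2 - 3 * (e + z)) * (e * (1 - 3 * e))
        + (1 - 2 * z) * (3 * z * (2 - 3 * e) - 36 * s * k + 36 * z * t)) :
    60 * z ≤ 61 * (e * (1 - 3 * e)) := by
  by_contra hcon
  push Not at hcon
  have hG0 : 0 ≤ e * (1 - 3 * e) := by apply mul_nonneg <;> linarith
  have hzpos : 0 < z := by linarith
  set D := 2 - 3 * e with hD
  set G := e * (1 - 3 * e) with hG
  set N := 2 - 3 * (e + z) with hN
  set q := 1 + 3 * e - 3 * z with hq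
  set h := D - 6 * k with hh
  have hDpos : 3 / 2 ≤ D := by linarith
  have hks : 3 / 4 * k ^ 2 ≤ k ^ 2 - k * s + s ^ 2 := by nlinarith [sq_nonneg (k / 2 - s)]
  have hzD : 0 ≤ z * (D - 3 * z) := by apply mul_nonneg <;> linarith
  have hkD : k ≤ 1 / 10 * D := by
    have hht : 0 ≤ 243 * z * (D - 3 * z) := by linarith
    by_contra hk'
    push Not at hk'
    rcases le_total 0 h with h0 | h0
    · have h1 : 0 ≤ 243 * h * t := by positivity
      have h2 : (1 / 10 * D) * (1 / 10 * D) ≤ k * k := by apply mul_le_mul <;> linarith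
      have h3 : 0 < D * D := by positivity
      linarith
    · linarith
  have hhpos : 0 ≤ h := by linarith
  have hkill : 0 ≤ 24 * q * (k - s) ^ 2 + (1 - 2 * z) * (36 * s * k) := by
    rcases le_total 0 s with h0 | h0
    · have h1 : 0 ≤ q := by linarith
      have h2 : 0 ≤ 1 - 2 * z := by linarith
      positivity
    · have h1 : 0 ≤ (-s) * k := mul_nonneg (by linarith) hk
      have h2 : 4 * ((-s) * k) ≤ (k - s) ^ 2 := by linarith [sq_nonneg (k + s)]
      have h3 := mul_le_mul_of_nonneg_left h2 (by linarith : (0:ℝ) ≤ 24 * q)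
      have h4 : 0 ≤ (96 * q - 36 * (1 - 2 * z)) * ((-s) * k) := mul_nonneg (by linarith) h1
      linarith
  have hmain : 3 * z * ((1 - 2 * z) * (D - 6 * z)) ≤ 2 * N * G + 2 * (18 * z * (1 - 2 * z) - q * h) * t := by
    have : N = D - 3 * z := by rw [hN, hD]; ring
    rw [this] at hS ⊢
    linarith
  rcases le_total (18 * z * (1 - 2 * z)) (q * h) with hc | hc
  · have h3 : 3 * z * ((1 - 2 * z) * (D - 6 * z)) ≤ 2 * N * G := by
      have := mul_nonneg (sub_nonneg.2 hc) ht
      linarith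
    have h4 : 61 * ((1 - 2 * z) * (D - 6 * z)) ≤ 40 * N := by
      have hNpos : 0 ≤ N := by linarith
      have h5 : 2 * N * (61 * G) ≤ 2 * N * (60 * z) := by
        apply mul_le_mul_of_nonneg_left hcon.le; linarith
      have h6 : 3 * z * (61 * ((1 - 2 * z) * (D - 6 * z))) ≤ 3 * z * (40 * N) := by linarith
      exact le_of_mul_le_mul_left h6 (by linarith)
    refine chk_sound csN1a 2 24 [e, z] boxN1a chkN1a ?_ ?_
    · simp only [inBox, boxN1a, sc]
      push_cast
      refine ⟨⟨?_, ?_⟩, ⟨?_, ?_⟩, trivial⟩ <;> linarith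
    · simp only [holds, csN1a, okx, den, getr, true_and, and_true]
      push_cast
      repeat' apply And.intro
      all_goals linarith
  · have hL : 2187 * k * k + 243 * z * (D - 3 * z) + 243 * h * t ≤ 17 * D * D := by linarith
    have hht : 0 ≤ h * t := mul_nonneg hhpos ht
    have h5 : 729 * h * z * ((1 - 2 * z) * (D - 6 * z)) ≤
       2 * (17 * D * D - (2187 * k * k + 243 * z * (D - 3 * z))) * (18 * z * (1 - 2 * z) - q * h)
         + 486 * h * N * G := by
      have a1 := mul_le_mul_of_nonneg_left hmain (mul_nonneg (by norm_num : (0:ℝ) ≤ 243) hhpos)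
      have a2 := mul_le_mul_of_nonneg_right (by linarith : 243 * h * t ≤ 17 * D * D - (2187 * k * k + 243 * z * (D - 3 * z)))
        (sub_nonneg.2 hc)
      linarith
    refine chk_sound csN1b 3 30 [e, z, k] boxN1b chkN1b ?_ ?_
    · simp only [inBox, boxN1b, sc]
      push_cast
      refine ⟨⟨?_, ?_⟩, ⟨?_, ?_⟩, ⟨?_, ?_⟩, trivial⟩ <;> linarith
    · simp only [holds, csN1b, okx, den, getr, true_and, and_true]
      push_cast
      repeat' apply And.intro
      all_goals linarith

theorem nc_k (e z k s t : ℝ) (he : 0 ≤ e) (he' : e ≤ 1 / 6) (hz : 0 ≤ z)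
    (hz' : 60 * z ≤ 61 * (e * (1 - 3 * e))) (hk : 0 ≤ k) (hkh : 0 < 2 - 3 * e - 6 * k) (hs : 2 * s ≤ z) (hs' : -z ≤ 2 * s)
    (ht : 0 ≤ t) (ht' : 10 * t ≤ 3)
    (hM : 2916 * (k ^ 2 - k * s + s ^ 2) + 243 * z * (2 - 3 * e - 3 * z)
      + 243 * (2 - 3 * e - 6 * k) * t ≤ 17 * (2 - 3 * e) ^ 2)
    (hS : 6 * (2 - 3 * (e + z)) * z * (1 - 2 * z) + 2 * (1 + 3 * e - 3 * z) * (2 - 3 * e - 6 * k) * t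
       + 24 * (1 + 3 * e - 3 * z) * (k - s) ^ 2 ≤ 2 * (2 - 3 * (e + z)) * (e * (1 - 3 * e))
        + (1 - 2 * z) * (3 * z * (2 - 3 * e) - 36 * s * k + 36 * z * t)) :
    12 * k ≤ 1 + 3 * e := by
  by_contra hcon
  push Not at hcon
  have hzb : z ≤ 9 / 100 := by nlinarith [sq_nonneg (e - 1 / 6)]
  obtain ⟨a, ha⟩ : ∃ a, a = k - s := ⟨_, rfl⟩
  have hsa : s = k - a := by linarith
  subst hsa
  set D := 2 - 3 * e with hD
  set G := e * (1 - 3 * e) with hG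
  set q := 1 + 3 * e - 3 * z with hq
  set h := D - 6 * k with hh
  have hN : 2 - 3 * (e + z) = D - 3 * z := by rw [hD]; ring
  have hDpos : 3 / 2 ≤ D := by linarith
  have hks : 3 / 4 * k ^ 2 ≤ k ^ 2 - k * (k - a) + (k - a) ^ 2 := by nlinarith [sq_nonneg (k / 2 - (k - a))]
  have hzD : 0 ≤ z * (D - 3 * z) := by apply mul_nonneg <;> linarith
  have hht : 0 ≤ h * t := mul_nonneg hkh.le ht
  have hkD : k ≤ 1 / 10 * D := by
    by_contra hk'
    push Not at hk'
    have h2 : (1 / 10 * D) * (1 / 10 * D) ≤ k * k := by apply mul_le_mul <;> linarith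
    have h3 : 0 < D * D := by positivity
    linarith
  have ha0 : 0 ≤ a := by linarith
  have hsk : 0 ≤ (1 - 2 * z) * (k * (z + 2 * (k - a))) := by
    apply mul_nonneg (by linarith); apply mul_nonneg hk; linarith
  have hmain : (1 - 2 * z) * (3 * z * (D - 6 * z - 6 * k)) + 24 * q * a * a ≤
      2 * (D - 3 * z) * G + 2 * (18 * z * (1 - 2 * z) - q * h) * t := by
    rw [hN] at hS
    have e1 : k - (k - a) = a := by ring
    rw [e1] at hS
    linarith
  rcases le_total (18 * z * (1 - 2 * z)) (q * h) with hc | hc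
  · have := mul_nonneg (sub_nonneg.2 hc) ht
    refine chk_sound csNc0 4 30 [e, z, k, a] boxNc chkNc0 ?_ ?_
    · simp only [inBox, boxNc, sc]
      push_cast
      refine ⟨⟨?_, ?_⟩, ⟨?_, ?_⟩, ⟨?_, ?_⟩, ⟨?_, ?_⟩, trivial⟩ <;> linarith
    · simp only [holds, csNc0, okx, den, getr, true_and, and_true]
      push_cast
      repeat' apply And.intro
      all_goals linarith
  · have := mul_nonneg (sub_nonneg.2 hc) (sub_nonneg.2 ht')
    refine chk_sound csNc1 4 30 [e, z, k, a] boxNc chkNc1 ?_ ?_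
    · simp only [inBox, boxNc, sc]
      push_cast
      refine ⟨⟨?_, ?_⟩, ⟨?_, ?_⟩, ⟨?_, ?_⟩, ⟨?_, ?_⟩, trivial⟩ <;> linarith
    · simp only [holds, csNc1, okx, den, getr, true_and, and_true]
      push_cast
      repeat' apply And.intro
      all_goals linarith

theorem n1_nat0 (d z k s t : ℝ) (hd : 1 / 2 ≤ d) (hd' : d ≤ 2 / 3) (hz : 0 ≤ z) (hz' : 10 * z ≤ 3 * d)
    (hk : 0 ≤ k) (hkh : 2 * k < d) (hs : 2 * s ≤ z) (hs' : -z ≤ 2 * s) (ht : 0 ≤ t) (ht' : 10 * t ≤ 3)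
    (hM : k ^ 2 - k * s + s ^ 2 + z * (d - z) / 4 + (d / 4 - k / 2) * t ≤ 17 / 324 * d ^ 2)
    (hS : (d - z) / 4 * (z - 2 * z ^ 2) + (1 - d - z) * ((d / 4 - k / 2) * t + (k - s) ^ 2) ≤
      (d - z) * (d * (1 - d) - 2 / 9) / 4 + (1 / 2 - z) * (z * d / 4 - s * k + z * t)) :
    20 * z ≤ 61 * (d * (1 - d) - 2 / 9) ∧ 4 * k ≤ 1 - d := by
  obtain ⟨e, rfl⟩ : ∃ e, d = 2 / 3 - e := ⟨2 / 3 - d, by ring⟩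
  have h1 := n1_z e z k s t (by linarith) (by linarith) hz (by linarith) hk (by linarith) hs hs' ht
    (by linarith) (by linarith)
  have h2 := nc_k e z k s t (by linarith) (by linarith) hz h1 hk (by linarith) hs hs' ht ht'
    (by linarith) (by linarith)
  constructor <;> linarith

theorem n1_nat (d z k s t : ℝ) (hd : 1 / 2 ≤ d) (hd' : d ≤ 2 / 3) (hz : 0 ≤ z) (hz' : 10 * z ≤ 3 * d)
    (hkh : 2 * |k| < d) (hs : 2 * s ≤ z) (hs' : -z ≤ 2 * s) (ht : 0 ≤ t) (ht' : 10 * t ≤ 3)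
    (hM : k ^ 2 - k * s + s ^ 2 + z * (d - z) / 4 + (d / 4 - |k| / 2) * t ≤ 17 / 324 * d ^ 2)
    (hS : (d - z) / 4 * (z - 2 * z ^ 2) + (1 - d - z) * ((d / 4 - |k| / 2) * t + (k - s) ^ 2) ≤
      (d - z) * (d * (1 - d) - 2 / 9) / 4 + (1 / 2 - z) * (z * d / 4 - s * k + z * t)) :
    20 * z ≤ 61 * (d * (1 - d) - 2 / 9) ∧ 4 * |k| ≤ 1 - d := by
  rcases le_total 0 k with h | h
  · rw [abs_of_nonneg h] at *
    exact n1_nat0 d z k s t hd hd' hz hz' h hkh hs hs' ht ht' hM hS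
  · rw [abs_of_nonpos h] at *
    exact n1_nat0 d z (-k) (-s) t hd hd' hz hz' (by linarith) hkh (by linarith) (by linarith) ht ht'
      (by linarith) (by linarith)

theorem pi_ineq (d z x y k : ℝ) (hd : 1 / 2 ≤ d) (hd' : d ≤ 2 / 3) (hz : 0 ≤ z)
    (hz' : 20 * z ≤ 61 * (d * (1 - d) - 2 / 9)) (hx : 0 ≤ x) (hxy : x ≤ y) (hk : 0 ≤ k)
    (hy : y ≤ d / 4 + z / 4 + k / 2) (hs : x + y ≤ (d - z) / 2)
    (hl : 0 ≤ (8 / 5 - 11 / 10 * d) * x + (d - 1 / 2) * y + (11 / 10 - d / 10) * z / 4 - (d / 2 - 5 / 18))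
    (hc : 0 ≤ (d - z) * (d * (1 - d) - 2 / 9) / 4 - (1 - d - z) * (x * y + k ^ 2)) :
    ((8 / 5 - 11 / 10 * d) * x + (d - 1 / 2) * y + (11 / 10 - d / 10) * z / 4 - (d / 2 - 5 / 18)) *
     ((d - z) * (d * (1 - d) - 2 / 9) / 4 - (1 - d - z) * (x * y + k ^ 2)) <
      1 / 2 * (2 / 3 - d) ^ 2 * ((1 / 2 - z) * ((d - z) / 2 - (x + y))) := by
  obtain ⟨e, rfl⟩ : ∃ e, d = 2 / 3 - e := ⟨2 / 3 - d, by ring⟩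
  have hzb : z ≤ 9 / 100 := by nlinarith [sq_nonneg (e - 1 / 6)]
  have hq : 0 ≤ 1 - (2 / 3 - e) - z := by linarith
  rcases le_total y ((2 / 3 - e) / 4 + z / 4) with h | h
  · obtain ⟨j, hj⟩ : ∃ j, y = (2 / 3 - e) / 4 + z / 4 - j := ⟨(2 / 3 - e) / 4 + z / 4 - y, by ring⟩
    subst hj
    have hkk := mul_nonneg hq (sq_nonneg k)
    have h1 := pi_A e z x j (by linarith) (by linarith) hz (by linarith) hx (by linarith) (by linarith)
      (by linarith) (by linarith) (by linarith)
    have h2 := mul_nonneg hl hkk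
    linarith
  · obtain ⟨j, hj⟩ : ∃ j, y = (2 / 3 - e) / 4 + z / 4 + j / 2 := ⟨2 * (y - (2 / 3 - e) / 4 - z / 4), by ring⟩
    subst hj
    have hkk : 0 ≤ (1 - (2 / 3 - e) - z) * (k ^ 2 - j ^ 2) := by
      apply mul_nonneg hq; nlinarith
    have h1 := pi_B e z x j (by linarith) (by linarith) hz (by linarith) hx (by linarith) (by linarith)
      (by linarith) (by linarith) (by linarith)
    have h2 := mul_nonneg hl hkk
    linarith

section rounding
variable {V : Type*} [Fintype V]

/-- The quadratic form of a real matrix. -/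
def QF (a : V → V → ℝ) (f : V → ℝ) : ℝ := ∑ x, ∑ y, a x y * (f x * f y)

/-- The associated bilinear form. -/
def BF (a : V → V → ℝ) (f g : V → ℝ) : ℝ := ∑ x, ∑ y, a x y * (f x * g y + g x * f y)

theorem QF_add (a : V → V → ℝ) (f g : V → ℝ) (s : ℝ) :
    QF a (fun x => f x + s * g x) = QF a f + s * BF a f g + s ^ 2 * QF a g := by
  unfold QF BF
  simp only [Finset.mul_sum, ← Finset.sum_add_distrib]
  refine Finset.sum_congr rfl fun x _ => Finset.sum_congr rfl fun y _ => ?_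
  ring

open Classical in
theorem QF_diff (a : V → V → ℝ) (h0 : ∀ x, a x x = 0) (hp : ∀ x y, 0 ≤ a x y) (x y : V) :
    QF a (fun z => (if z = x then 1 else 0) - (if z = y then 1 else 0)) ≤ 0 := by
  unfold QF
  have : ∀ p q : V, a p q * (((if p = x then (1:ℝ) else 0) - (if p = y then 1 else 0)) *
      ((if q = x then 1 else 0) - (if q = y then 1 else 0))) ≤ 0 := by
    intro p q
    rcases eq_or_ne p q with rfl | hpq
    · simp [h0]
    · apply mul_nonpos_of_nonneg_of_nonpos (hp p q)
      split_ifs <;> simp_all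
  exact Finset.sum_nonpos fun p _ => Finset.sum_nonpos fun q _ => this p q

open Classical in
theorem rounding (a : V → V → ℝ) (h0 : ∀ x, a x x = 0) (hp : ∀ x y, 0 ≤ a x y) (k : ℕ) :
    ∀ (N : ℕ) (f : V → ℝ), (∀ x, 0 ≤ f x ∧ f x ≤ 1) → ∑ x, f x = k →
      (Finset.univ.filter fun x => 0 < f x ∧ f x < 1).card ≤ N →
      ∃ S : Finset V, S.card = k ∧ ∑ x ∈ S, ∑ y ∈ S, a x y ≤ QF a f := by
  intro N
  induction N with
  | zero =>
    intro f hf hs hN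
    have hintf : ∀ x, f x = if f x = 1 then 1 else 0 := by
      intro x
      have hx : x ∉ Finset.univ.filter fun x => 0 < f x ∧ f x < 1 := by
        rw [Finset.card_eq_zero.1 (Nat.le_zero.1 hN)]; simp
      simp only [Finset.mem_filter, Finset.mem_univ, true_and, not_and, not_lt] at hx
      split_ifs with h
      · exact h
      · rcases (hf x).1.eq_or_lt with h1 | h1
        · exact h1.symm
        · exact absurd (le_antisymm (hf x).2 (hx h1)) h
    refine ⟨Finset.univ.filter fun x => f x = 1, ?_, ?_⟩
    · have : (((Finset.univ.filter fun x => f x = 1).card : ℕ) : ℝ) = k := by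
        rw [← hs, Finset.sum_congr rfl fun x _ => hintf x]; simp
      exact_mod_cast this
    · unfold QF
      rw [Finset.sum_filter]
      refine Finset.sum_le_sum fun x _ => ?_
      split_ifs with h
      · rw [Finset.sum_filter]
        refine Finset.sum_le_sum fun y _ => ?_
        split_ifs with h2
        · simp [h, h2]
        · exact mul_nonneg (hp _ _) (mul_nonneg (hf _).1 (hf _).1)
      · exact Finset.sum_nonneg fun y _ => mul_nonneg (hp _ _) (mul_nonneg (hf _).1 (hf _).1)
  | succ N ih =>
    intro f hf hs hN
    set F := Finset.univ.filter fun x => 0 < f x ∧ f x < 1 with hF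
    rcases Nat.lt_or_ge F.card (N + 1) with hlt | hge
    · exact ih f hf hs (Nat.lt_succ_iff.1 hlt)
    have hmem : ∀ x, x ∈ F ↔ 0 < f x ∧ f x < 1 := by intro x; simp [hF]
    obtain ⟨x, hx⟩ : F.Nonempty := Finset.card_pos.1 (by omega)
    have hy : ∃ y ∈ F, y ≠ x := by
      by_contra hcon
      push Not at hcon
      have hsplit := Finset.add_sum_erase Finset.univ f (Finset.mem_univ x)
      have hintf : ∀ z ∈ Finset.univ.erase x, f z = ((if f z = 1 then 1 else 0 : ℕ) : ℝ) := by
        intro z hz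
        have hzx := Finset.ne_of_mem_erase hz
        have hzF : z ∉ F := fun h => hzx (hcon z h)
        rw [hmem, not_and, not_lt] at hzF
        split_ifs with h
        · simp [h]
        · rcases (hf z).1.eq_or_lt with h1 | h1
          · simp [← h1]
          · exact absurd (le_antisymm (hf z).2 (hzF h1)) h
      rw [Finset.sum_congr rfl hintf, ← Nat.cast_sum, hs] at hsplit
      have hx' := (hmem x).1 hx
      set m := ∑ z ∈ Finset.univ.erase x, (if f z = 1 then 1 else 0 : ℕ)
      have h1 : (m : ℝ) < k := by linarith
      have h2 : (k : ℝ) < m + 1 := by linarith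
      have h1' : m < k := by exact_mod_cast h1
      have h2' : k < m + 1 := by exact_mod_cast h2
      omega
    obtain ⟨y, hyF, hyx⟩ := hy
    -- the main step, for an ordered pair with favourable direction
    have step : ∀ x y : V, x ∈ F → y ∈ F → y ≠ x →
        BF a f (fun z => (if z = x then 1 else 0) - (if z = y then 1 else 0)) ≤ 0 →
        ∃ S : Finset V, S.card = k ∧ ∑ x ∈ S, ∑ y ∈ S, a x y ≤ QF a f := by
      intro x y hx hyF hyx hB
      have hx' := (hmem x).1 hx
      have hy' := (hmem y).1 hyF
      set g : V → ℝ := fun z => (if z = x then 1 else 0) - (if z = y then 1 else 0) with hg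
      set s := min (1 - f x) (f y) with hsdef
      have hs0 : 0 < s := lt_min (by linarith) hy'.1
      have hs1 : s ≤ 1 - f x := min_le_left _ _
      have hs2 : s ≤ f y := min_le_right _ _
      have gx : g x = 1 := by simp [hg, hyx.symm]
      have gy : g y = -1 := by simp [hg, hyx]
      have gz : ∀ z, z ≠ x → z ≠ y → g z = 0 := by intro z h1 h2; simp [hg, h1, h2]
      have hle : QF a (fun z => f z + s * g z) ≤ QF a f := by
        rw [QF_add]
        have := QF_diff a h0 hp x y
        have h1 : s * BF a f g ≤ 0 := mul_nonpos_of_nonneg_of_nonpos hs0.le hB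
        have h2 : s ^ 2 * QF a g ≤ 0 := mul_nonpos_of_nonneg_of_nonpos (sq_nonneg s) this
        linarith
      obtain ⟨S, hS1, hS2⟩ := ih (fun z => f z + s * g z) (by
          intro z
          rcases eq_or_ne z x with rfl | h1
          · simp only [gx]; constructor <;> linarith
          · rcases eq_or_ne z y with rfl | h2
            · simp only [gy]; constructor <;> linarith
            · simp only [gz z h1 h2, mul_zero, add_zero]; exact hf z)
        (by
          rw [Finset.sum_add_distrib, ← Finset.mul_sum, hs]
          simp [hg, Finset.sum_sub_distrib])
        (by
          have hss : (Finset.univ.filter fun z => 0 < f z + s * g z ∧ f z + s * g z < 1) ⊂ F := by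
            rw [Finset.ssubset_iff_of_subset]
            · rcases min_choice (1 - f x) (f y) with h | h
              · refine ⟨x, hx, ?_⟩
                simp only [Finset.mem_filter, Finset.mem_univ, true_and, gx, not_and, not_lt]
                intro _; rw [hsdef, h]; linarith
              · refine ⟨y, hyF, ?_⟩
                simp only [Finset.mem_filter, Finset.mem_univ, true_and, gy, not_and]
                intro h3; rw [hsdef, h] at h3; linarith
            · intro z hz
              simp only [Finset.mem_filter, Finset.mem_univ, true_and] at hz
              rcases eq_or_ne z x with rfl | h1
              · exact hx
              · rcases eq_or_ne z y with rfl | h2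
                · exact hyF
                · rw [gz z h1 h2, mul_zero, add_zero] at hz
                  exact (hmem z).2 hz
          have := Finset.card_lt_card hss
          omega)
      exact ⟨S, hS1, hS2.trans hle⟩
    rcases le_total (BF a f (fun z => (if z = x then 1 else 0) - (if z = y then 1 else 0))) 0 with h | h
    · exact step x y hx hyF hyx h
    · refine step y x hyF hx hyx.symm ?_
      have : BF a f (fun z => (if z = y then 1 else 0) - (if z = x then 1 else 0)) =
          - BF a f (fun z => (if z = x then 1 else 0) - (if z = y then 1 else 0)) := by
        unfold BF
        simp only [← Finset.sum_neg_distrib]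
        refine Finset.sum_congr rfl fun p _ => Finset.sum_congr rfl fun q _ => ?_
        ring
      linarith

end rounding

section graph
variable {V : Type*} [Fintype V]

open Classical in
/-- Real-valued adjacency indicator. -/
noncomputable def ad (G : SimpleGraph V) (x y : V) : ℝ := if G.Adj x y then 1 else 0

open Classical in
theorem edges_count (G : SimpleGraph V) [DecidableRel G.Adj] (S : Finset V) :
    2 * ((G.edgeFinset.filter (fun e => ∀ v ∈ e, v ∈ S)).card : ℝ) = ∑ x ∈ S, ∑ y ∈ S, ad G x y := by
  let H : SimpleGraph V :=
    { Adj := fun x y => G.Adj x y ∧ x ∈ S ∧ y ∈ S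
      symm := ⟨fun x y h => ⟨h.1.symm, h.2.2, h.2.1⟩⟩
      loopless := ⟨fun x h => G.loopless.irrefl x h.1⟩ }
  have h1 : H.edgeFinset = G.edgeFinset.filter (fun e => ∀ v ∈ e, v ∈ S) := by
    ext e
    induction e using Sym2.ind with
    | _ x y => simp [H, SimpleGraph.mem_edgeFinset]
  rw [← h1]
  have h2 := H.sum_degrees_eq_twice_card_edges
  have h3 : (2 * (H.edgeFinset.card : ℝ)) = ∑ x, (H.degree x : ℝ) := by exact_mod_cast h2.symm
  rw [h3, ← Finset.sum_filter_add_sum_filter_not Finset.univ (fun x => x ∈ S)]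
  have h4 : ∑ x ∈ Finset.univ.filter (fun x => x ∉ S), (H.degree x : ℝ) = 0 := by
    refine Finset.sum_eq_zero fun x hx => ?_
    simp only [Finset.mem_filter, Finset.mem_univ, true_and] at hx
    have : H.neighborFinset x = ∅ := by ext y; simp [H, hx]
    rw [← SimpleGraph.card_neighborFinset_eq_degree, this]; simp
  rw [h4, add_zero]
  refine Finset.sum_congr (by ext; simp) fun x hx => ?_
  have : H.neighborFinset x = S.filter (fun y => G.Adj x y) := by
    ext y; simp [H, hx, and_comm]
  rw [← SimpleGraph.card_neighborFinset_eq_degree, this, Finset.card_filter]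
  push_cast
  refine Finset.sum_congr rfl fun y _ => ?_
  unfold ad
  split_ifs <;> rfl

end graph

section meas
set_option linter.unusedSectionVars false
variable {V : Type*} [Fintype V] (G : SimpleGraph V)

/-- Normalised counting measure of a set. -/
noncomputable def mu (S : Finset V) : ℝ := (1 / (Fintype.card V : ℝ)) * S.card

/-- Normalised degree of a vertex into a set. -/
noncomputable def dg (x : V) (T : Finset V) : ℝ := (1 / (Fintype.card V : ℝ)) * ∑ y ∈ T, ad G x y

/-- Normalised integral over a set. -/
noncomputable def it (S : Finset V) (f : V → ℝ) : ℝ := (1 / (Fintype.card V : ℝ)) * ∑ x ∈ S, f x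

/-- Normalised number of ordered edges between two sets. -/
noncomputable def ed (S T : Finset V) : ℝ := it S (fun x => dg G x T)

theorem w_nonneg : (0:ℝ) ≤ 1 / (Fintype.card V : ℝ) := by positivity

theorem ad_nonneg (x y : V) : 0 ≤ ad G x y := by unfold ad; split_ifs <;> norm_num
theorem ad_le_one (x y : V) : ad G x y ≤ 1 := by unfold ad; split_ifs <;> norm_num
theorem ad_comm (x y : V) : ad G x y = ad G y x := by unfold ad; rw [G.adj_comm]
theorem ad_self (x : V) : ad G x x = 0 := by unfold ad; simp

theorem it_mono {S : Finset V} {f g : V → ℝ} (h : ∀ x ∈ S, f x ≤ g x) : it S f ≤ it S g :=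
  mul_le_mul_of_nonneg_left (Finset.sum_le_sum h) w_nonneg

theorem it_congr {S : Finset V} {f g : V → ℝ} (h : ∀ x ∈ S, f x = g x) : it S f = it S g := by
  unfold it; rw [Finset.sum_congr rfl h]

theorem it_const (S : Finset V) (c : ℝ) : it S (fun _ => c) = mu S * c := by
  unfold it mu; simp; ring

theorem it_add (S : Finset V) (f g : V → ℝ) : it S (fun x => f x + g x) = it S f + it S g := by
  unfold it; rw [Finset.sum_add_distrib]; ring

theorem it_sub (S : Finset V) (f g : V → ℝ) : it S (fun x => f x - g x) = it S f - it S g := by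
  unfold it; rw [Finset.sum_sub_distrib]; ring

theorem it_smul (S : Finset V) (c : ℝ) (f : V → ℝ) : it S (fun x => c * f x) = c * it S f := by
  unfold it; rw [← Finset.mul_sum]; ring

theorem it_nonneg {S : Finset V} {f : V → ℝ} (h : ∀ x ∈ S, 0 ≤ f x) : 0 ≤ it S f :=
  mul_nonneg w_nonneg (Finset.sum_nonneg h)

theorem it_le {S : Finset V} {f : V → ℝ} {c : ℝ} (h : ∀ x ∈ S, f x ≤ c) : it S f ≤ mu S * c := by
  rw [← it_const]; exact it_mono h

theorem le_it {S : Finset V} {f : V → ℝ} {c : ℝ} (h : ∀ x ∈ S, c ≤ f x) : mu S * c ≤ it S f := by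
  rw [← it_const]; exact it_mono h

theorem mu_nonneg (S : Finset V) : 0 ≤ mu S := mul_nonneg w_nonneg (by positivity)
theorem dg_nonneg (x : V) (T : Finset V) : 0 ≤ dg G x T :=
  mul_nonneg w_nonneg (Finset.sum_nonneg fun y _ => ad_nonneg G x y)
theorem ed_nonneg (S T : Finset V) : 0 ≤ ed G S T := it_nonneg fun x _ => dg_nonneg G x T

theorem dg_le_mu (x : V) (T : Finset V) : dg G x T ≤ mu T := by
  have : dg G x T = it T (ad G x) := rfl
  rw [this]
  have := it_le (S := T) (f := ad G x) (c := 1) (fun y _ => ad_le_one G x y)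
  linarith

theorem ed_comm (S T : Finset V) : ed G S T = ed G T S := by
  unfold ed it dg
  simp only [← Finset.mul_sum]
  rw [Finset.sum_comm]
  simp only [ad_comm G]

open Classical in
theorem it_union {S T : Finset V} (h : Disjoint S T) (f : V → ℝ) : it (S ∪ T) f = it S f + it T f := by
  unfold it; rw [Finset.sum_union h]; ring

open Classical in
theorem mu_union {S T : Finset V} (h : Disjoint S T) : mu (S ∪ T) = mu S + mu T := by
  unfold mu; rw [Finset.card_union_of_disjoint h]; push_cast; ring

open Classical in
theorem dg_union (x : V) {S T : Finset V} (h : Disjoint S T) :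
    dg G x (S ∪ T) = dg G x S + dg G x T := it_union h _

open Classical in
theorem ed_union_left {S T : Finset V} (h : Disjoint S T) (U : Finset V) :
    ed G (S ∪ T) U = ed G S U + ed G T U := it_union h _

open Classical in
theorem ed_union_right {S T : Finset V} (h : Disjoint S T) (U : Finset V) :
    ed G U (S ∪ T) = ed G U S + ed G U T := by
  rw [ed_comm, ed_union_left G h, ed_comm G S, ed_comm G T]

theorem dg_mono (x : V) {S T : Finset V} (h : S ⊆ T) : dg G x S ≤ dg G x T :=
  mul_le_mul_of_nonneg_left (Finset.sum_le_sum_of_subset_of_nonneg h fun y _ _ => ad_nonneg G x y) w_nonneg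

theorem mu_mono {S T : Finset V} (h : S ⊆ T) : mu S ≤ mu T :=
  mul_le_mul_of_nonneg_left (by exact_mod_cast Finset.card_le_card h) w_nonneg

theorem ed_mono_left {S T : Finset V} (h : S ⊆ T) (U : Finset V) : ed G S U ≤ ed G T U :=
  mul_le_mul_of_nonneg_left (Finset.sum_le_sum_of_subset_of_nonneg h fun y _ _ => dg_nonneg G y U) w_nonneg

theorem mu_univ [Nonempty V] : mu (Finset.univ : Finset V) = 1 := by
  unfold mu; simp

theorem exists_ge_avg {S : Finset V} {f : V → ℝ} {c : ℝ} (hS : S.Nonempty) (h : mu S * c ≤ it S f) :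
    ∃ x ∈ S, c ≤ f x := by
  by_contra hcon
  push Not at hcon
  have h1 : ∑ x ∈ S, f x < ∑ x ∈ S, c := Finset.sum_lt_sum_of_nonempty hS hcon
  have h2 : 0 < (1 / (Fintype.card V : ℝ)) := by
    have : 0 < Fintype.card V := Fintype.card_pos_iff.2 ⟨hS.choose⟩
    positivity
  have h3 := mul_lt_mul_of_pos_left h1 h2
  rw [← it_const] at h
  unfold it at h
  linarith

theorem mu_pos {S : Finset V} (hS : S.Nonempty) : 0 < mu S := by
  have : 0 < Fintype.card V := Fintype.card_pos_iff.2 ⟨hS.choose⟩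
  have := hS.card_pos
  unfold mu; positivity

/-- Cauchy--Schwarz for the normalised integral. -/
theorem it_sq (S : Finset V) (f : V → ℝ) : it S f ^ 2 ≤ mu S * it S (fun x => f x ^ 2) := by
  unfold it mu
  have := sq_sum_le_card_mul_sum_sq (s := S) (f := f)
  have h2 := mul_le_mul_of_nonneg_left this (mul_nonneg (w_nonneg (V := V)) (w_nonneg (V := V)))
  linarith

/-- The contrary hypothesis: every fractional half has large energy. -/
def Dense : Prop := ∀ f : V → ℝ, (∀ x, 0 ≤ f x ∧ f x ≤ 1) → it Finset.univ f = 1 / 2 →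
  1 / 9 < it Finset.univ (fun x => it Finset.univ (fun y => ad G x y * f y) * f x)

open Classical in
theorem it_step (A B C : Finset V) (α β γ : ℝ) (g : V → ℝ) :
    it Finset.univ (fun x => g x * (α * (if x ∈ A then 1 else 0) + β * (if x ∈ B then 1 else 0)
      + γ * (if x ∈ C then 1 else 0))) = α * it A g + β * it B g + γ * it C g := by
  unfold it
  simp only [mul_add, Finset.sum_add_distrib, mul_ite, mul_one, mul_zero, Finset.sum_ite_mem,
    Finset.univ_inter, Finset.mul_sum]
  congr 1
  · congr 1 <;> exact Finset.sum_congr rfl fun x _ => by ring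
  · exact Finset.sum_congr rfl fun x _ => by ring

open Classical in
theorem test3 (hd : Dense G) (A B C : Finset V) (α β γ : ℝ) (hAB : Disjoint A B) (hAC : Disjoint A C)
    (hBC : Disjoint B C) (hα : 0 ≤ α) (hα' : α ≤ 1) (hβ : 0 ≤ β) (hβ' : β ≤ 1) (hγ : 0 ≤ γ) (hγ' : γ ≤ 1)
    (hm : α * mu A + β * mu B + γ * mu C = 1 / 2) :
    1 / 9 < α ^ 2 * ed G A A + β ^ 2 * ed G B B + γ ^ 2 * ed G C C + 2 * α * β * ed G A B
      + 2 * α * γ * ed G A C + 2 * β * γ * ed G B C := by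
  have h := hd (fun x => α * (if x ∈ A then 1 else 0) + β * (if x ∈ B then 1 else 0)
      + γ * (if x ∈ C then 1 else 0)) (by
    intro x
    by_cases h1 : x ∈ A
    · have h2 := Finset.disjoint_left.1 hAB h1
      have h3 := Finset.disjoint_left.1 hAC h1
      simp [h1, h2, h3, hα, hα']
    · by_cases h2 : x ∈ B
      · have h3 := Finset.disjoint_left.1 hBC h2
        simp [h1, h2, h3, hβ, hβ']
      · by_cases h3 : x ∈ C
        · simp [h1, h2, h3, hγ, hγ']
        · simp [h1, h2, h3]) (by
    have := it_step A B C α β γ (fun _ => 1)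
    simp only [one_mul, it_const, mul_one] at this
    rw [this, hm])
  have e1 : ∀ x, it Finset.univ (fun y => ad G x y * (α * (if y ∈ A then 1 else 0) + β * (if y ∈ B then 1 else 0)
      + γ * (if y ∈ C then 1 else 0))) = α * dg G x A + β * dg G x B + γ * dg G x C := by
    intro x; rw [it_step]; rfl
  simp only [e1] at h
  have e2 := it_step A B C α β γ (fun x => α * dg G x A + β * dg G x B + γ * dg G x C)
  rw [e2] at h
  have e3 : ∀ S, it S (fun x => α * dg G x A + β * dg G x B + γ * dg G x C) =
      α * ed G S A + β * ed G S B + γ * ed G S C := by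
    intro S
    rw [it_add, it_add, it_smul, it_smul, it_smul]
    rfl
  rw [e3, e3, e3, ed_comm G B A, ed_comm G C A, ed_comm G C B] at h
  linarith

theorem test1 (hd : Dense G) (A : Finset V) (α : ℝ) (hα : 0 ≤ α) (hα' : α ≤ 1)
    (hm : α * mu A = 1 / 2) : 1 / 9 < α ^ 2 * ed G A A := by
  have := test3 G hd A ∅ ∅ α 0 0 (by simp) (by simp) (by simp) hα hα' le_rfl (by norm_num) le_rfl
    (by norm_num) (by linarith)
  linarith

theorem test2 (hd : Dense G) (A B : Finset V) (α β : ℝ) (hAB : Disjoint A B) (hα : 0 ≤ α) (hα' : α ≤ 1)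
    (hβ : 0 ≤ β) (hβ' : β ≤ 1) (hm : α * mu A + β * mu B = 1 / 2) :
    1 / 9 < α ^ 2 * ed G A A + β ^ 2 * ed G B B + 2 * α * β * ed G A B := by
  have := test3 G hd A B ∅ α β 0 hAB (by simp) (by simp) hα hα' hβ hβ' le_rfl
    (by norm_num) (by linarith)
  linarith

end meas

section struct
set_option linter.unusedSectionVars false
variable {V : Type*} [Fintype V] (G : SimpleGraph V)

/-- Triangle-freeness on a set. -/
def TF (N : Finset V) : Prop := ∀ x ∈ N, ∀ y ∈ N, ∀ z ∈ N, G.Adj x y → G.Adj x z → G.Adj y z → False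

variable {G}

theorem tf_pt {N : Finset V} (h : TF G N) {x y z : V} (hx : x ∈ N) (hy : y ∈ N) (hz : z ∈ N)
    (hxy : G.Adj x y) : ad G x z + ad G y z ≤ 1 := by
  unfold ad
  have := h x hx y hy z hz hxy
  split_ifs <;> first | (exfalso; tauto) | norm_num

theorem tf_pt2 {N : Finset V} (h : TF G N) {x y z : V} (hx : x ∈ N) (hy : y ∈ N) (hz : z ∈ N) :
    ad G x y ≤ 1 - ad G z x * ad G z y := by
  unfold ad
  have := h z hz x hx y hy
  split_ifs <;> first | (exfalso; tauto) | norm_num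

theorem tf_deg {N : Finset V} (h : TF G N) {x y : V} (hx : x ∈ N) (hy : y ∈ N) (hxy : G.Adj x y)
    {T : Finset V} (hT : T ⊆ N) : dg G x T + dg G y T ≤ mu T := by
  have h1 : dg G x T + dg G y T = it T (fun z => ad G x z + ad G y z) := (it_add T _ _).symm
  have h2 := it_le (S := T) (f := fun z => ad G x z + ad G y z) (c := 1)
    (fun z hz => tf_pt h hx hy (hT hz) hxy)
  linarith

theorem tf_prod {N : Finset V} (h : TF G N) {z : V} (hz : z ∈ N) {P R : Finset V} (hP : P ⊆ N)
    (hR : R ⊆ N) : ed G P R ≤ mu P * mu R - dg G z P * dg G z R := by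
  have h1 : ∀ x ∈ P, dg G x R ≤ mu R - dg G z R * ad G z x := by
    intro x hx
    have e1 : it R (fun y => 1 - ad G z x * ad G z y) = mu R - dg G z R * ad G z x := by
      rw [it_sub, it_smul, it_const]
      have : it R (fun y => ad G z y) = dg G z R := rfl
      rw [this]; ring
    rw [← e1]
    exact it_mono fun y hy => tf_pt2 h (hP hx) (hR hy) hz
  have h2 : ed G P R ≤ it P (fun x => mu R - dg G z R * ad G z x) := it_mono h1
  rw [it_sub, it_const, it_smul] at h2
  have : it P (fun y => ad G z y) = dg G z P := rfl
  rw [this] at h2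
  linarith

theorem ed_le_prod (P R : Finset V) : ed G P R ≤ mu P * mu R := it_le fun x _ => dg_le_mu G x R

theorem ed_zero {P R : Finset V} (h : ∀ x ∈ P, ∀ y ∈ R, ¬ G.Adj x y) : ed G P R = 0 := by
  unfold ed it dg
  rw [Finset.sum_eq_zero, mul_zero]
  intro x hx
  rw [Finset.sum_eq_zero, mul_zero]
  intro y hy
  simp [ad, h x hx y hy]

theorem tf_mantel {N : Finset V} (h : TF G N) {Z : Finset V} (hZ : Z ⊆ N) : 2 * ed G Z Z ≤ mu Z ^ 2 := by
  have h1 : ∀ x ∈ Z, it Z (fun y => ad G x y * (dg G x Z + dg G y Z)) ≤ mu Z * dg G x Z := by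
    intro x hx
    have e1 : mu Z * dg G x Z = it Z (fun y => mu Z * ad G x y) := (it_smul _ _ _).symm
    rw [e1]
    refine it_mono fun y hy => ?_
    by_cases hxy : G.Adj x y
    · have := tf_deg h (hZ hx) (hZ hy) hxy hZ
      simp only [ad, hxy, if_true]; linarith
    · simp [ad, hxy]
  have h2 : it Z (fun x => it Z (fun y => ad G x y * (dg G x Z + dg G y Z))) ≤ mu Z * ed G Z Z := by
    refine (it_mono h1).trans_eq ?_
    rw [it_smul]; rfl
  have h3 : it Z (fun x => it Z (fun y => ad G x y * (dg G x Z + dg G y Z))) =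
      2 * it Z (fun x => dg G x Z ^ 2) := by
    have a1 : ∀ x, it Z (fun y => ad G x y * (dg G x Z + dg G y Z)) =
        dg G x Z ^ 2 + it Z (fun y => ad G x y * dg G y Z) := by
      intro x
      have : (fun y => ad G x y * (dg G x Z + dg G y Z)) =
        fun y => dg G x Z * ad G x y + ad G x y * dg G y Z := by funext y; ring
      rw [this, it_add, it_smul]
      have : it Z (fun y => ad G x y) = dg G x Z := rfl
      rw [this]; ring
    simp only [a1]
    rw [it_add]
    have a2 : it Z (fun x => it Z (fun y => ad G x y * dg G y Z)) = it Z (fun y => dg G y Z ^ 2) := by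
      have : ∀ y, dg G y Z ^ 2 = it Z (fun x => ad G x y * dg G y Z) := by
        intro y
        have : (fun x => ad G x y * dg G y Z) = fun x => dg G y Z * ad G y x := by
          funext x; rw [ad_comm]; ring
        rw [this, it_smul]
        have : it Z (fun x => ad G y x) = dg G y Z := rfl
        rw [this]; ring
      simp only [this]
      unfold it
      simp only [← Finset.mul_sum]
      rw [Finset.sum_comm]
    rw [a2]; ring
  have h4 := it_sq Z (fun x => dg G x Z)
  have h5 : it Z (fun x => dg G x Z) = ed G Z Z := rfl
  rw [h5] at h4
  have hm := mu_nonneg Z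
  have he := ed_nonneg G Z Z
  have h6 : 2 * ed G Z Z ^ 2 ≤ mu Z ^ 2 * ed G Z Z := by
    have := mul_le_mul_of_nonneg_left (h3 ▸ h2) hm
    linarith
  rcases he.eq_or_lt with h0 | h0
  · rw [← h0, mul_zero]; positivity
  · by_contra hcon
    push Not at hcon
    have := mul_lt_mul_of_pos_right hcon h0
    linarith

open Classical in
/-- A vertex whose neighbourhood gives a good cut. -/
theorem exists_cut {N : Finset V} (h : TF G N) (hN : N.Nonempty) :
    ∃ S ⊆ N, ed G S S = 0 ∧ ed G N N ^ 2 ≤ mu N ^ 2 * ed G S (N \ S) := by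
  have h4 := it_sq N (fun x => dg G x N)
  have h5 : it N (fun x => dg G x N) = ed G N N := rfl
  rw [h5] at h4
  have hm := mu_pos hN
  have h3 : it N (fun u => ed G (N.filter fun x => G.Adj u x) N) = it N (fun x => dg G x N ^ 2) := by
    have a1 : ∀ u, ed G (N.filter fun x => G.Adj u x) N = it N (fun x => ad G u x * dg G x N) := by
      intro u
      unfold ed
      unfold it
      rw [Finset.sum_filter]
      congr 1
      refine Finset.sum_congr rfl fun x _ => ?_
      unfold ad; by_cases hux : G.Adj u x <;> simp [hux]
    simp only [a1]
    have : ∀ y, dg G y N ^ 2 = it N (fun x => ad G x y * dg G y N) := by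
      intro y
      have : (fun x => ad G x y * dg G y N) = fun x => dg G y N * ad G y x := by
        funext x; rw [ad_comm]; ring
      rw [this, it_smul]
      have : it N (fun x => ad G y x) = dg G y N := rfl
      rw [this]; ring
    simp only [this]
    unfold it
    simp only [← Finset.mul_sum]
    rw [Finset.sum_comm]
  have h6 : mu N * (ed G N N ^ 2 / mu N ^ 2) ≤ it N (fun u => ed G (N.filter fun x => G.Adj u x) N) := by
    rw [h3]
    have : mu N * (ed G N N ^ 2 / mu N ^ 2) = ed G N N ^ 2 / mu N := by field_simp
    rw [this, div_le_iff₀ hm]; linarith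
  obtain ⟨u, hu, hu2⟩ := exists_ge_avg hN h6
  have hind : ed G (N.filter fun x => G.Adj u x) (N.filter fun x => G.Adj u x) = 0 := by
    apply ed_zero
    intro x hx y hy hxy
    simp only [Finset.mem_filter] at hx hy
    exact h u hu x hx.1 y hy.1 hx.2 hy.2 hxy
  refine ⟨N.filter fun x => G.Adj u x, Finset.filter_subset _ _, hind, ?_⟩
  have hsplit : ed G (N.filter fun x => G.Adj u x) N = ed G (N.filter fun x => G.Adj u x) (N.filter fun x => G.Adj u x)
      + ed G (N.filter fun x => G.Adj u x) (N \ (N.filter fun x => G.Adj u x)) := by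
    rw [← ed_union_right G Finset.disjoint_sdiff, Finset.union_sdiff_of_subset (Finset.filter_subset _ _)]
  rw [hind, zero_add] at hsplit
  rw [← hsplit]
  rw [div_le_iff₀ (by positivity)] at hu2
  linarith

open Classical in
theorem lem2 [Nonempty V] (hd : Dense G) {d : ℝ} (hdeg : ∀ x, dg G x Finset.univ ≤ d) (P R : Finset V)
    (hPR : Disjoint P R) (hsum : mu P + mu R = d) (hd1 : 1 / 3 ≤ d) (hd2 : d ≤ 2 / 3)
    (hk : 2 * |mu P - mu R| ≤ 1 - d) :
    ed G P R - (ed G P P + ed G R R) / 2 < d / 2 - 2 / 9 + 9 * ((ed G P P + ed G R R) / 2) ^ 2 := by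
  set O := Finset.univ \ (P ∪ R) with hO
  have hdis : Disjoint (P ∪ R) O := Finset.disjoint_sdiff
  have hPO : Disjoint P O := Finset.disjoint_of_subset_left Finset.subset_union_left hdis
  have hRO : Disjoint R O := Finset.disjoint_of_subset_left Finset.subset_union_right hdis
  have hun : (P ∪ R) ∪ O = Finset.univ := by rw [hO, Finset.union_sdiff_of_subset (Finset.subset_univ _)]
  have hmO : mu O = 1 - d := by
    have := mu_univ (V := V)
    rw [← hun, mu_union hdis, mu_union hPR] at this
    linarith
  have hdeg' : ∀ S, ed G S P + ed G S R + ed G S O ≤ mu S * d := by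
    intro S
    have : ed G S Finset.univ ≤ mu S * d := it_le fun x _ => hdeg x
    rw [← hun, ed_union_right G hdis, ed_union_right G hPR] at this
    exact this
  have h1 := hdeg' P
  have h2 := hdeg' R
  have h3 := hdeg' O
  rw [hmO, ed_comm G O P, ed_comm G O R] at h3
  rw [ed_comm G R P] at h2
  set κ := (mu P - mu R) / 2 with hκ
  have hk1 := (abs_le.1 (show |mu P - mu R| ≤ (1 - d) / 2 by linarith)).1
  have hk2 := (abs_le.1 (show |mu P - mu R| ≤ (1 - d) / 2 by linarith)).2
  have hd3 : 0 < 1 - d := by linarith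
  obtain ⟨σ, hσ⟩ : ∃ σ, σ * (1 - d) = κ := ⟨κ / (1 - d), by field_simp⟩
  have hs1 : -(1 / 4) ≤ σ := by
    by_contra hcon; push Not at hcon
    have := mul_lt_mul_of_pos_right hcon hd3; linarith
  have hs2 : σ ≤ 1 / 4 := by
    by_contra hcon; push Not at hcon
    have := mul_lt_mul_of_pos_right hcon hd3; linarith
  have t1 := test2 G hd P O 1 (1 / 2 - σ) hPO (by norm_num) le_rfl (by linarith) (by linarith)
    (by rw [hmO]; linarith)
  have t2 := test2 G hd R O 1 (1 / 2 + σ) hRO (by norm_num) le_rfl (by linarith) (by linarith)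
    (by rw [hmO]; linarith)
  have hp : mu P = d / 2 + κ := by linarith
  have hr : mu R = d / 2 - κ := by linarith
  rw [hp] at h1
  rw [hr] at h2
  have n1 := ed_nonneg G P O
  have n2 := ed_nonneg G R O
  have n3 := ed_nonneg G O O
  have n4 := ed_nonneg G P P
  have n5 := ed_nonneg G R R
  generalize ed G P P = b1 at *
  generalize ed G R R = b2 at *
  generalize ed G P R = m at *
  generalize ed G P O = x1 at *
  generalize ed G R O = x2 at *
  generalize ed G O O = x3 at *
  rw [← hσ] at h1 h2
  clear_value κ
  have g1 := mul_le_mul_of_nonneg_left h1 (show 0 ≤ 1 / 2 - 2 * σ by linarith)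
  have g2 := mul_le_mul_of_nonneg_left h2 (show 0 ≤ 1 / 2 + 2 * σ by linarith)
  have g3 := mul_le_mul_of_nonneg_left h3 (show 0 ≤ 2 * σ ^ 2 by positivity)
  have g4 : 0 ≤ 2 * σ ^ 2 * x1 := by positivity
  have g5 : 0 ≤ 2 * σ ^ 2 * x2 := by positivity
  have key : m - (b1 + b2) / 2 < d / 2 - 2 / 9 - 2 * σ ^ 2 * (d * (1 - d)) + 2 * σ * (b1 - b2) := by
    linarith
  have hdd : 2 / 9 ≤ d * (1 - d) := by
    linarith [mul_nonneg (sub_nonneg.2 hd1) (sub_nonneg.2 hd2)]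
  have g6 := mul_le_mul_of_nonneg_left hdd (show 0 ≤ 2 * σ ^ 2 by positivity)
  have g7 : 2 * σ * (b1 - b2) - 4 / 9 * σ ^ 2 ≤ 9 * ((b1 + b2) / 2) ^ 2 := by
    have : (b1 - b2) ^ 2 ≤ (b1 + b2) ^ 2 := by linarith [mul_nonneg n4 n5]
    linarith [sq_nonneg (2 / 3 * σ - 3 / 2 * (b1 - b2))]
  linarith

end struct

section regimes
set_option maxHeartbeats 1000000
variable {V : Type*} [Fintype V] {G : SimpleGraph V}

theorem regime0 [Nonempty V] (hd : Dense G) {d : ℝ} (hdeg : ∀ x, dg G x Finset.univ ≤ d) : 4 / 9 < d := by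
  have h1 := test1 G hd Finset.univ (1 / 2) (by norm_num) (by norm_num) (by rw [mu_univ]; norm_num)
  have h2 : ed G Finset.univ Finset.univ ≤ mu (Finset.univ : Finset V) * d := it_le fun x _ => hdeg x
  rw [mu_univ] at h2
  linarith

theorem nonempty_of_mu {N : Finset V} (h : 0 < mu N) : N.Nonempty := by
  rcases N.eq_empty_or_nonempty with rfl | h1
  · simp [mu] at h
  · exact h1

theorem regimeI_num (d t : ℝ) (h1 : 4 / 9 < d) (h2 : d < 1 / 2)
    (h : (1 - d) ^ 2 / 9 ≤ 1 / 2 * t + 2 * (1 / 2 - d) * (1 - d) * d ^ 2 + (1 / 2 - d) ^ 2 * d * (1 - 2 * d)) :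
    217 / 1000 * d ^ 2 ≤ t := by
  obtain ⟨u, rfl⟩ : ∃ u, d = 4 / 9 + u := ⟨d - 4 / 9, by ring⟩
  have hu : 0 ≤ u := by linarith
  have hu2 : 0 ≤ 1 / 18 - u := by linarith
  have a1 := mul_nonneg hu hu2
  have a2 := mul_nonneg hu a1
  have a3 := mul_nonneg hu a2
  have a4 := mul_nonneg hu2 a1
  have a5 := mul_nonneg hu2 a2
  nlinarith

open Classical in
theorem regimeI [Nonempty V] (hd : Dense G) {N : Finset V} (hT : TF G N) {d : ℝ}
    (hdeg : ∀ x, dg G x Finset.univ ≤ d) (hN : mu N = d) (hd1 : 4 / 9 < d) (hd2 : d < 1 / 2) : False := by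
  set O := Finset.univ \ N with hO
  have hdis : Disjoint N O := Finset.disjoint_sdiff
  have hun : N ∪ O = Finset.univ := by rw [hO, Finset.union_sdiff_of_subset (Finset.subset_univ _)]
  have hmO : mu O = 1 - d := by
    have := mu_univ (V := V)
    rw [← hun, mu_union hdis] at this
    linarith
  have hdeg' : ∀ S, ed G S N + ed G S O ≤ mu S * d := by
    intro S
    have : ed G S Finset.univ ≤ mu S * d := it_le fun x _ => hdeg x
    rw [← hun, ed_union_right G hdis] at this
    exact this
  have h1 := hdeg' N
  have h2 := hdeg' O
  rw [hmO, ed_comm G O N] at h2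
  rw [hN] at h1
  have hd3 : 0 < 1 - d := by linarith
  have ht : 217 / 1000 * d ^ 2 ≤ ed G N N / 2 := by
    apply regimeI_num d _ hd1 hd2
    obtain ⟨l, hl⟩ : ∃ l, l * (1 - d) = 1 / 2 - d := ⟨(1 / 2 - d) / (1 - d), by field_simp⟩
    have l0 : 0 ≤ l := by
      by_contra hcon; push Not at hcon
      have := mul_lt_mul_of_pos_right hcon hd3; linarith
    have l1 : l ≤ 1 := by
      by_contra hcon; push Not at hcon
      have := mul_lt_mul_of_pos_right hcon hd3; linarith
    have t1 := test2 G hd N O 1 l hdis (by norm_num) le_rfl l0 l1 (by rw [hmO, hN, hl]; ring)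
    have g1 := mul_le_mul_of_nonneg_left h1 (show 0 ≤ 2 * l - l ^ 2 by nlinarith)
    have g2 := mul_le_mul_of_nonneg_left h2 (show 0 ≤ l ^ 2 by positivity)
    have g3 : 1 / 9 ≤ (1 - l) ^ 2 * ed G N N + 2 * l * d ^ 2 + l ^ 2 * (d * (1 - 2 * d)) := by
      linarith
    have g4 := mul_le_mul_of_nonneg_left g3 (show 0 ≤ (1 - d) ^ 2 by positivity)
    have e1 : (1 - d) ^ 2 * ((1 - l) ^ 2 * ed G N N + 2 * l * d ^ 2 + l ^ 2 * (d * (1 - 2 * d))) =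
      ((1 - d) - l * (1 - d)) ^ 2 * ed G N N + 2 * (l * (1 - d)) * (1 - d) * d ^ 2
        + (l * (1 - d)) ^ 2 * (d * (1 - 2 * d)) := by ring
    rw [e1, hl] at g4
    linarith
  obtain ⟨S, hS, hS0, hS1⟩ := exists_cut hT (nonempty_of_mu (by linarith : 0 < mu N))
  have hsd : Disjoint S (N \ S) := Finset.disjoint_sdiff
  have hsu : S ∪ (N \ S) = N := Finset.union_sdiff_of_subset hS
  have hms : mu S + mu (N \ S) = d := by rw [← mu_union hsd, hsu, hN]
  have hpr := ed_le_prod (G := G) S (N \ S)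
  have htt : ed G N N = 2 * ed G S (N \ S) + ed G (N \ S) (N \ S) := by
    conv_lhs => rw [← hsu]
    rw [ed_union_left G hsd, ed_union_right G hsd, ed_union_right G hsd, hS0, ed_comm G (N \ S) S]
    ring
  have hb := ed_nonneg G (N \ S) (N \ S)
  rw [hN] at hS1
  have hm : 868 / 1000 * (ed G N N / 2) ≤ ed G S (N \ S) := by
    have hd0 : 0 < d ^ 2 := by nlinarith
    have ht0 : 0 ≤ ed G N N := ed_nonneg G N N
    have := mul_le_mul_of_nonneg_right ht ht0
    have h3 : d ^ 2 * (868 / 1000 * (ed G N N / 2)) ≤ d ^ 2 * ed G S (N \ S) := by linarith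
    exact le_of_mul_le_mul_left h3 hd0
  have hκ : (mu S - mu (N \ S)) ^ 2 ≤ ((1 - d) / 2) ^ 2 := by
    have : (mu S - mu (N \ S)) ^ 2 = d ^ 2 - 4 * (mu S * mu (N \ S)) := by rw [← hms]; ring
    rw [this]; nlinarith
  have hκ' := abs_le_of_sq_le_sq hκ (by linarith)
  have h2 := lem2 hd hdeg S (N \ S) hsd hms (by linarith) (by linarith) (by linarith)
  rw [hS0] at h2
  generalize ed G S (N \ S) = m at *
  generalize ed G (N \ S) (N \ S) = b at *
  rw [htt] at hm ht
  have hdd : d ^ 2 ≤ 1 / 4 := by nlinarith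
  have hmm : m ≤ 1 / 16 := by nlinarith [sq_nonneg (mu S - mu (N \ S))]
  have hb2 : b / 2 ≤ 1 / 100 := by linarith
  have : (b / 2) ^ 2 ≤ 1 / 100 * (b / 2) := by nlinarith
  nlinarith

open Classical in
theorem regimeIV [Nonempty V] (hd : Dense G) {N : Finset V} (hT : TF G N) {d : ℝ}
    (hN : mu N = d) (hd1 : 2 / 3 ≤ d) : False := by
  have hne : N.Nonempty := nonempty_of_mu (by linarith : 0 < mu N)
  obtain ⟨u, hu, hmax⟩ := Finset.exists_max_image N (fun x => dg G x N) hne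
  set S := N.filter fun x => G.Adj u x with hSdef
  have hS : S ⊆ N := Finset.filter_subset _ _
  have hS0 : ed G S S = 0 := by
    apply ed_zero
    intro x hx y hy hxy
    simp only [hSdef, Finset.mem_filter] at hx hy
    exact hT u hu x hx.1 y hy.1 hx.2 hy.2 hxy
  have hc : dg G u N = mu S := by
    unfold dg mu
    rw [hSdef, Finset.card_filter]; push_cast; rfl
  have hsd : Disjoint S (N \ S) := Finset.disjoint_sdiff
  have hsu : S ∪ (N \ S) = N := Finset.union_sdiff_of_subset hS
  have hms : mu S + mu (N \ S) = d := by rw [← mu_union hsd, hsu, hN]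
  have htt : ed G N N = 2 * ed G S (N \ S) + ed G (N \ S) (N \ S) := by
    conv_lhs => rw [← hsu]
    rw [ed_union_left G hsd, ed_union_right G hsd, ed_union_right G hsd, hS0, ed_comm G (N \ S) S]
    ring
  have hd0 : 0 < d := by linarith
  have t0 := test1 G hd N (1 / (2 * d)) (by positivity) (by
    rw [div_le_one (by positivity)]; linarith) (by rw [hN]; field_simp)
  have hS1 : 4 / 9 * d ^ 2 < ed G N N := by
    have e1 : (1 / (2 * d)) ^ 2 * ed G N N = ed G N N / (4 * d ^ 2) := by field_simp; ring
    rw [e1, lt_div_iff₀ (by positivity)] at t0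
    linarith
  have hcd : ed G N N ≤ d * mu S := by
    rw [← hN, ← hc]; exact it_le fun x hx => hmax x hx
  have hP : ed G (N \ S) (N \ S) + ed G S (N \ S) ≤ mu (N \ S) * mu S := by
    have h1 : ed G (N \ S) N ≤ mu (N \ S) * mu S := by
      rw [← hc]; exact it_le fun x hx => hmax x (Finset.sdiff_subset hx)
    have h2 : ed G (N \ S) N = ed G (N \ S) S + ed G (N \ S) (N \ S) := by
      rw [← ed_union_right G hsd, hsu]
    rw [h2, ed_comm G (N \ S) S] at h1
    linarith
  have n1 := ed_nonneg G (N \ S) (N \ S)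
  have n2 := ed_nonneg G S (N \ S)
  have n3 := mu_nonneg S
  have n4 := mu_nonneg (N \ S)
  obtain ⟨c, hcdef⟩ : ∃ c, c = mu S := ⟨_, rfl⟩
  obtain ⟨p, hpdef⟩ : ∃ p, p = mu (N \ S) := ⟨_, rfl⟩
  obtain ⟨b, hbdef⟩ : ∃ b, b = ed G (N \ S) (N \ S) := ⟨_, rfl⟩
  obtain ⟨m, hmdef⟩ : ∃ m, m = ed G S (N \ S) := ⟨_, rfl⟩
  rw [← hcdef] at n3 hcd hP hms
  rw [← hpdef] at n4 hP hms
  rw [← hbdef, ← hmdef] at htt hP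
  rw [← hbdef] at n1
  rw [← hmdef] at n2
  have hc1 : 8 / 27 < c := by
    by_contra hcon; push Not at hcon
    have : d * c ≤ d * (8 / 27) := mul_le_mul_of_nonneg_left hcon hd0.le
    nlinarith
  have hc2 : c < 1 / 2 := by
    by_contra hcon; push Not at hcon
    have t1 := test1 G hd S (1 / (2 * c)) (by positivity) (by
      rw [div_le_one (by positivity)]; linarith) (by rw [← hcdef]; field_simp)
    rw [hS0] at t1
    linarith
  have hp0 : 0 < p := by linarith
  have hc3 : c < 1 / 3 := by
    obtain ⟨l, hl⟩ : ∃ l, l * p = 1 / 2 - c := ⟨(1 / 2 - c) / p, by field_simp⟩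
    have l0 : 0 ≤ l := by
      by_contra hcon; push Not at hcon
      have := mul_lt_mul_of_pos_right hcon hp0; linarith
    have l1 : l ≤ 1 := by
      by_contra hcon; push Not at hcon
      have := mul_lt_mul_of_pos_right hcon hp0; linarith
    have t1 := test2 G hd S (N \ S) 1 l hsd (by norm_num) le_rfl l0 l1 (by
      rw [← hcdef, ← hpdef, hl]; ring)
    rw [hS0, ← hbdef, ← hmdef] at t1
    have g1 := mul_le_mul_of_nonneg_left hP l0
    have g2 : l ^ 2 * b ≤ l * b := by
      have : l ^ 2 ≤ l := by nlinarith
      exact mul_le_mul_of_nonneg_right this n1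
    have g3 : 0 ≤ l * b := by positivity
    have g4 : l * (p * c) = (1 / 2 - c) * c := by rw [← hl]; ring
    by_contra hcon; push Not at hcon
    nlinarith
  have hp1 : 1 / 3 < p := by linarith
  have hb1 : b < 2 * (p * c) - 4 / 9 * (p + c) ^ 2 := by
    rw [htt, ← hms] at hS1
    linarith
  rcases le_or_gt (1 / 2) p with hp2 | hp2
  · have t1 := test1 G hd (N \ S) (1 / (2 * p)) (by positivity) (by
      rw [div_le_one (by positivity)]; linarith) (by rw [← hpdef]; field_simp)
    have e1 : (1 / (2 * p)) ^ 2 * b = b / (4 * p ^ 2) := by field_simp; ring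
    rw [← hbdef, e1, lt_div_iff₀ (by positivity)] at t1
    nlinarith [sq_nonneg (p - c), sq_nonneg p]
  · have hc0 : 0 < c := by linarith
    obtain ⟨l, hl⟩ : ∃ l, l * c = 1 / 2 - p := ⟨(1 / 2 - p) / c, by field_simp⟩
    have l0 : 0 ≤ l := by
      by_contra hcon; push Not at hcon
      have := mul_lt_mul_of_pos_right hcon hc0; linarith
    have l1 : l ≤ 1 := by
      by_contra hcon; push Not at hcon
      have := mul_lt_mul_of_pos_right hcon hc0; linarith
    have t1 := test2 G hd S (N \ S) l 1 hsd l0 l1 (by norm_num) le_rfl (by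
      rw [← hcdef, ← hpdef, hl]; ring)
    rw [hS0, ← hbdef, ← hmdef] at t1
    have g1 := mul_le_mul_of_nonneg_left hP l0
    have g4 : l * (p * c) = (1 / 2 - p) * p := by rw [← hl]; ring
    have g5 : 0 < (p - 1 / 3) * (p - 1 / 6) := by apply mul_pos <;> linarith
    rcases le_or_gt (1 / 2) l with h | h
    · have := mul_nonneg n1 (sub_nonneg.2 h)
      linarith
    · have g6 : 2 * ((p - 1 / 3) * (p - 1 / 6)) < b * (1 - 2 * l) := by linarith
      have g7 : b * (1 - 2 * l) * c ≤ b * (2 * (p - 1 / 3)) := by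
        have h9 : (1 - 2 * l) * c ≤ 2 * (p - 1 / 3) := by linarith
        have := mul_le_mul_of_nonneg_left h9 n1
        linarith
      have g8 := mul_lt_mul_of_pos_right g6 hc0
      have g9 : (p - 1 / 3) * ((p - 1 / 6) * c) < (p - 1 / 3) * b := by linarith
      have g10 : (p - 1 / 6) * c < b := lt_of_mul_lt_mul_left g9 (by linarith)
      have g11 : 0 ≤ (p - 1 / 3) * (8 / 3 - c) := by apply mul_nonneg <;> linarith
      linarith [sq_nonneg (c - 11 / 48), sq_nonneg (p - 1 / 3)]

end regimes

section maincore

theorem num_a (d p r a b m : ℝ) (hd : 0 < d) (hp : 0 ≤ p) (hr : 0 ≤ r) (hpr : p + r = d)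
    (hm : 16 / 81 * d ^ 2 ≤ m) (h1 : m ≤ p * r - a * r / 2) (h2 : m ≤ p * r - b * p / 2)
    (ha : 0 ≤ a) (hb : 0 ≤ b) : a + b ≤ 42 / 100 * d := by
  by_contra hcon
  push Not at hcon
  have g1 := mul_le_mul_of_nonneg_left h1 hp
  have g2 := mul_le_mul_of_nonneg_left h2 hr
  have g3 : (a + b) * (p * r) ≤ 2 * d * (p * r - m) := by rw [← hpr]; linarith
  have g4 : p * r ≤ d ^ 2 / 4 := by rw [← hpr]; linarith [sq_nonneg (p - r)]
  have g5 : 0 < p * r := by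
    have : 0 < d ^ 2 := by positivity
    linarith [mul_nonneg ha hr]
  have g6 := mul_lt_mul_of_pos_right hcon g5
  have g7 : d * (16 / 81 * d ^ 2) ≤ d * m := mul_le_mul_of_nonneg_left hm hd.le
  have g8 := mul_le_mul_of_nonneg_left g4 hd.le
  have : 0 < d ^ 3 := by positivity
  linarith

theorem num_b (d z : ℝ) (hd : 0 < d) (hz0 : 0 ≤ z) (hz : z ≤ 42 / 100 * d) (h : z * (d - z) / 4 ≤ 17 / 324 * d ^ 2) :
    10 * z ≤ 3 * d := by
  by_contra hcon
  push Not at hcon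
  have := mul_nonneg (sub_nonneg.2 hcon.le) (sub_nonneg.2 hz)
  have : 0 < d * d := by positivity
  nlinarith

theorem num_f (d p r b m : ℝ) (hd : 0 < d) (hp : 0 ≤ p) (hpr : p + r = d)
    (hm : 16 / 81 * d ^ 2 ≤ m) (h2 : m ≤ p * r - b * p / 2) : p + b ≤ 3 / 4 * d := by
  by_contra hcon
  push Not at hcon
  have g1 := mul_le_mul_of_nonneg_left hcon.le hp
  have : 0 < d * d := by positivity
  have hr : r = d - p := by linarith
  subst hr
  linarith [sq_nonneg (p - 5 / 8 * d)]

variable {V : Type*} [Fintype V]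

theorem it_pos {Z : Finset V} (hZ : Z.Nonempty) {f : V → ℝ} (h : ∀ x ∈ Z, 0 < f x) : 0 < it Z f := by
  have : 0 < Fintype.card V := Fintype.card_pos_iff.2 ⟨hZ.choose⟩
  have := Finset.sum_pos h hZ
  unfold it; positivity

theorem num_d (d z k s x y : ℝ) (hd : 1 / 2 ≤ d) (hd' : d ≤ 2 / 3) (hz : 0 ≤ z) (hz' : 10 * z ≤ 3 * d)
    (hk : 0 ≤ k) (hk' : 4 * k ≤ 1 - d)
    (hx : x ≤ d / 4 + k / 2) (hy : y ≤ d / 4 + k / 2)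
    (hM : 3 / 4 * k ^ 2 + z * (d - z) / 4 + x * y ≤ 17 / 324 * d ^ 2) : x + y < (d - z) / 2 := by
  by_contra hcon
  push Not at hcon
  have h1 := mul_nonneg (sub_nonneg.2 hx) (sub_nonneg.2 hy)
  have h2 := mul_le_mul_of_nonneg_left hcon (show 0 ≤ d / 4 + k / 2 by linarith)
  have h3 : 0 < d * d := by positivity
  have h4 := mul_nonneg hz (sub_nonneg.2 hz')
  have h5 : z * z ≤ 3 / 10 * d * (3 / 10 * d) := by apply mul_self_le_mul_self hz; linarith
  have h6 := mul_nonneg hz (by linarith : 0 ≤ d)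
  linarith [sq_nonneg (k - z / 4)]

set_option maxHeartbeats 2000000 in
theorem main_core {Z : Finset V} {X Y H : V → ℝ} {d p r a b m m0 eZ : ℝ} (hd : 1 / 2 ≤ d) (hd' : d < 2 / 3)
    (hp : 0 ≤ p) (hr : 0 ≤ r) (hpr : p + r = d) (ha : 0 ≤ a) (hb : 0 ≤ b)
    (hZ : mu Z = a + b) (hm : 16 / 81 * d ^ 2 ≤ m) (h1 : m ≤ p * r - a * r / 2) (h2 : m ≤ p * r - b * p / 2)
    (h3 : m ≤ m0 + a * r / 2 + b * p / 2) (h4 : m0 ≤ (p - a) * (r - b))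
    (h5 : ∀ z ∈ Z, m0 ≤ (p - a) * (r - b) - X z * Y z)
    (hX0 : ∀ z ∈ Z, 0 ≤ X z) (hXY : ∀ z ∈ Z, X z ≤ Y z) (hYH : ∀ z ∈ Z, Y z ≤ H z)
    (hHH : ∀ z ∈ Z, H z = r / 2 ∨ H z = p / 2) (hH : it Z H = a * r / 2 + b * p / 2)
    (he0 : 0 ≤ eZ) (he1 : eZ ≤ (a + b) ^ 2 / 4)
    (hA : (d - (a + b)) / 18 < (1 - d - (a + b)) * m0 + (1 / 2 - (a + b)) * (it Z X + it Z Y) + (d - (a + b)) * eZ)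
    (hB : 2 * |p - r| ≤ 1 - d → m0 + it Z Y - 11 / 10 * it Z X - 11 / 10 * eZ < d / 2 - 2 / 9) : False := by
  have hd0 : 0 < d := by linarith
  obtain ⟨ζ, hζ⟩ : ∃ ζ, ζ = a + b := ⟨_, rfl⟩
  obtain ⟨κ, hκ⟩ : ∃ κ, κ = (p - r) / 2 := ⟨_, rfl⟩
  obtain ⟨s, hs⟩ : ∃ s, s = (a - b) / 2 := ⟨_, rfl⟩
  have ep : p = d / 2 + κ := by linarith
  have er : r = d / 2 - κ := by linarith
  have ea : a = ζ / 2 + s := by linarith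
  have eb : b = ζ / 2 - s := by linarith
  have hζ0 : 0 ≤ ζ := by linarith
  have hζa := num_a d p r a b m hd0 hp hr hpr hm h1 h2 ha hb
  rw [← hζ] at hζa hA he1 hZ
  have hprod : (p - a) * (r - b) = (d - ζ) ^ 2 / 4 - (κ - s) ^ 2 := by rw [ep, er, ea, eb]; ring
  have hab : a * r / 2 + b * p / 2 = ζ * d / 4 - s * κ := by rw [ep, er, ea, eb]; ring
  rw [hprod] at h4 h5
  rw [hab] at hH
  have h3' : m ≤ m0 + (ζ * d / 4 - s * κ) := by linarith
  have M1 : ∀ w, m0 ≤ (d - ζ) ^ 2 / 4 - (κ - s) ^ 2 - w →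
      κ ^ 2 - κ * s + s ^ 2 + ζ * (d - ζ) / 4 + w ≤ 17 / 324 * d ^ 2 := by
    intro w hw; linarith
  have M0 := M1 0 (by linarith)
  have hκs : 3 / 4 * κ ^ 2 ≤ κ ^ 2 - κ * s + s ^ 2 := by linarith [sq_nonneg (κ / 2 - s)]
  have hζb : 10 * ζ ≤ 3 * d := by
    apply num_b d ζ hd0 hζ0 hζa; linarith [sq_nonneg κ]
  have hq : 0 ≤ 1 - d - ζ := by linarith
  have hzn : 0 ≤ ζ * (d - ζ) := by apply mul_nonneg <;> linarith
  have hκ1 : |κ| ≤ 3 / 10 * d := by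
    apply abs_le_of_sq_le_sq _ (by linarith)
    have : 0 ≤ d * d := by positivity
    linarith
  have hHlo : ∀ z ∈ Z, d / 4 - |κ| / 2 ≤ H z := by
    intro z hz
    rcases hHH z hz with h | h <;> rw [h]
    · rw [er]; linarith [le_abs_self κ]
    · rw [ep]; linarith [neg_abs_le κ]
  have hHhi : ∀ z ∈ Z, H z ≤ d / 4 + |κ| / 2 := by
    intro z hz
    rcases hHH z hz with h | h <;> rw [h]
    · rw [er]; linarith [neg_abs_le κ]
    · rw [ep]; linarith [le_abs_self κ]
  have hit0 : it Z X + it Z Y = it Z (fun z => X z + Y z) := (it_add Z X Y).symm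
  -- the parameter measuring the excess
  have hδ : ∃ δ, 0 ≤ δ ∧ (∀ z ∈ Z, X z + Y z ≤ H z + δ) ∧ 10 * δ ≤ 3 ∧
      m0 ≤ (d - ζ) ^ 2 / 4 - (κ - s) ^ 2 - (d / 4 - |κ| / 2) * δ := by
    by_cases hcase : ∀ z ∈ Z, X z + Y z ≤ H z
    · exact ⟨0, le_rfl, fun z hz => by linarith [hcase z hz], by norm_num, by linarith⟩
    · push Not at hcase
      obtain ⟨z0, hz0, hz0'⟩ := hcase
      obtain ⟨z1, hz1, hmax⟩ := Finset.exists_max_image Z (fun z => X z + Y z - H z) ⟨z0, hz0⟩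
      have hpos : 0 ≤ X z1 + Y z1 - H z1 := by linarith [hmax z0 hz0]
      refine ⟨X z1 + Y z1 - H z1, hpos, fun z hz => by linarith [hmax z hz], ?_, ?_⟩
      · linarith [hXY z1 hz1, hYH z1 hz1, hHhi z1 hz1]
      · have b1 := h5 z1 hz1
        have b2 := mul_nonneg (sub_nonneg.2 ((hXY z1 hz1).trans (hYH z1 hz1))) (sub_nonneg.2 (hYH z1 hz1))
        have b3 := mul_le_mul_of_nonneg_right (hHlo z1 hz1) hpos
        linarith
  obtain ⟨δ, hδ0, hδ1, hδ2, hδ3⟩ := hδ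
  have hC : it Z X + it Z Y ≤ ζ * d / 4 - s * κ + ζ * δ := by
    rw [hit0, ← hH, ← hZ, ← it_const, ← it_add]
    exact it_mono hδ1
  have hNe : (d - ζ) * eZ ≤ (d - ζ) * (ζ ^ 2 / 4) := mul_le_mul_of_nonneg_left he1 (by linarith)
  have SS : ∀ w, m0 ≤ (d - ζ) ^ 2 / 4 - (κ - s) ^ 2 - w →
      (d - ζ) / 4 * (ζ - 2 * ζ ^ 2) + (1 - d - ζ) * (w + (κ - s) ^ 2) <
      (d - ζ) * (d * (1 - d) - 2 / 9) / 4 + (1 / 2 - ζ) * (it Z X + it Z Y) := by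
    intro w hw
    have := mul_le_mul_of_nonneg_left hw hq
    linarith
  have hn1 := n1_nat d ζ κ s δ hd hd'.le hζ0 hζb (by linarith) (by linarith) (by linarith) hδ0 hδ2
    (M1 _ hδ3) (by
      have g1 := SS _ hδ3
      have g2 := mul_le_mul_of_nonneg_left hC (show 0 ≤ 1 / 2 - ζ by linarith)
      linarith)
  obtain ⟨hζc, hκc⟩ := hn1
  have hB' := hB (by
    have : p - r = 2 * κ := by linarith
    rw [this, abs_mul, abs_two]; linarith)
  have hXs : 0 ≤ it Z X := it_nonneg hX0
  -- the inequality for the weights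
  have hstar : 1 / 2 * (2 / 3 - d) ^ 2 + ζ * (d / 2 - 5 / 18) <
      (8 / 5 - 11 / 10 * d) * it Z X + (d - 1 / 2) * it Z Y + (11 / 10 - d / 10) * ζ ^ 2 / 4 := by
    have g1 := mul_le_mul_of_nonneg_left hB'.le hq
    have g2 := mul_le_mul_of_nonneg_left he1 (show 0 ≤ 11 / 10 - d / 10 - 21 / 10 * ζ by linarith)
    have g3 := mul_nonneg hζ0 hXs
    have g4 := mul_nonneg hζ0 (sq_nonneg ζ)
    linarith
  set L : V → ℝ := fun z => (8 / 5 - 11 / 10 * d) * X z + (d - 1 / 2) * Y z + (11 / 10 - d / 10) * ζ / 4 - (d / 2 - 5 / 18) with hL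
  set Q : V → ℝ := fun z => (1 / 2 - ζ) * ((d - ζ) / 2 - (X z + Y z)) with hQ
  have eL : it Z L = (8 / 5 - 11 / 10 * d) * it Z X + (d - 1 / 2) * it Z Y + (11 / 10 - d / 10) * ζ ^ 2 / 4
      - ζ * (d / 2 - 5 / 18) := by
    rw [hL, it_sub, it_add, it_add, it_smul, it_smul, it_const, it_const, hZ]; ring
  have eQ : it Z Q = (1 / 2 - ζ) * ((d - ζ) / 2 * ζ - (it Z X + it Z Y)) := by
    rw [hQ, it_smul, it_sub, it_add, it_const, hZ]; ring
  have hLpos : 1 / 2 * (2 / 3 - d) ^ 2 < it Z L := by rw [eL]; linarith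
  rcases Z.eq_empty_or_nonempty with hemp | hne
  · have : it Z L = 0 := by rw [hemp]; simp [it]
    rw [this] at hLpos
    linarith [sq_nonneg (2 / 3 - d)]
  have hXYs : ∀ z ∈ Z, X z + Y z < (d - ζ) / 2 := by
    intro z hz
    have hy := (hYH z hz).trans (hHhi z hz)
    refine num_d d ζ |κ| s (X z) (Y z) hd hd'.le hζ0 hζb (abs_nonneg κ) hκc ((hXY z hz).trans hy) hy ?_
    rw [sq_abs]
    linarith [M1 _ (h5 z hz)]
  have hQpos : ∀ z ∈ Z, 0 < Q z := fun z hz =>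
    mul_pos (by linarith) (by linarith [hXYs z hz])
  have hS := it_pos hne hQpos
  have hSlt : ∀ z ∈ Z, it Z Q < (d - ζ) * (d * (1 - d) - 2 / 9) / 4 - (1 - d - ζ) * (X z * Y z + |κ - s| ^ 2) := by
    intro z hz
    rw [eQ, sq_abs]
    linarith [SS _ (h5 z hz)]
  have hterm : ∀ z ∈ Z, it Z Q * L z ≤ 1 / 2 * (2 / 3 - d) ^ 2 * Q z := by
    intro z hz
    have hQz := hQpos z hz
    have hS2 := hSlt z hz
    rcases le_total (L z) 0 with h | h
    · have g1 : it Z Q * L z ≤ 0 := mul_nonpos_of_nonneg_of_nonpos hS.le h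
      have g2 : 0 ≤ 1 / 2 * (2 / 3 - d) ^ 2 * Q z := by positivity
      linarith
    · have hy := (hYH z hz).trans (hHhi z hz)
      have hks : |κ| ≤ |κ - s| + ζ / 2 := by
        have h6 : |s| ≤ ζ / 2 := abs_le.2 ⟨by linarith, by linarith⟩
        have h7 := abs_add_le (κ - s) s
        rw [sub_add_cancel] at h7
        linarith
      have := pi_ineq d ζ (X z) (Y z) |κ - s| hd hd'.le hζ0 hζc (hX0 z hz) (hXY z hz) (abs_nonneg _)
        (by linarith) (hXYs z hz).le h (by linarith)
      have g1 := mul_le_mul_of_nonneg_left hS2.le h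
      simp only [hL] at g1 this ⊢
      simp only [hQ] at g1 this ⊢
      linarith
  have hsum : it Z Q * it Z L ≤ 1 / 2 * (2 / 3 - d) ^ 2 * it Z Q := by
    have e1 := it_mono hterm
    have e2 : it Z (fun z => it Z Q * L z) = it Z Q * it Z L := it_smul Z _ L
    have e3 : it Z (fun z => 1 / 2 * (2 / 3 - d) ^ 2 * Q z) = 1 / 2 * (2 / 3 - d) ^ 2 * it Z Q := it_smul Z _ Q
    rwa [e2, e3] at e1
  have h9 := mul_lt_mul_of_pos_left hLpos hS
  rw [mul_comm (it Z Q) (1 / 2 * (2 / 3 - d) ^ 2)] at h9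
  exact absurd hsum (not_le.2 h9)

end maincore

theorem num_aux1 {d : ℝ} (h0 : 0 ≤ d) (h1 : d ≤ 2 / 3) : d ^ 2 ≤ 4 / 9 := by nlinarith

theorem num_aux2 {b : ℝ} (h0 : 0 ≤ b) (h1 : b ≤ 1 / 90) : 9 * b ^ 2 ≤ 1 / 10 * b := by nlinarith

section mainregime
variable {V : Type*} [Fintype V] {G : SimpleGraph V}

open Classical in
theorem exists_maxcut (G : SimpleGraph V) (N : Finset V) : ∃ P R : Finset V, Disjoint P R ∧ P ∪ R = N ∧
    ∀ P' R' : Finset V, Disjoint P' R' → P' ∪ R' = N → ed G P' R' ≤ ed G P R := by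
  obtain ⟨P, hP, hmax⟩ := Finset.exists_max_image N.powerset (fun P => ed G P (N \ P)) ⟨∅, by simp⟩
  rw [Finset.mem_powerset] at hP
  refine ⟨P, N \ P, Finset.disjoint_sdiff, Finset.union_sdiff_of_subset hP, fun P' R' hd hu => ?_⟩
  have h1 : P' ⊆ N := by rw [← hu]; exact Finset.subset_union_left
  have h2 : R' = N \ P' := by
    rw [← hu, Finset.union_sdiff_left, Finset.sdiff_eq_self_of_disjoint hd.symm]
  rw [h2]
  exact hmax P' (Finset.mem_powerset.2 h1)

open Classical in
theorem loc_opt {N P R : Finset V} (hPR : Disjoint P R) (hu : P ∪ R = N)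
    (hmax : ∀ P' R' : Finset V, Disjoint P' R' → P' ∪ R' = N → ed G P' R' ≤ ed G P R) :
    ∀ x ∈ P, dg G x P ≤ dg G x R := by
  intro x hx
  have hxR : x ∉ R := Finset.disjoint_left.1 hPR hx
  have hd1 : Disjoint (P \ {x}) {x} := Finset.sdiff_disjoint
  have hd2 : Disjoint R {x} := Finset.disjoint_singleton_right.2 hxR
  have hd3 : Disjoint (P \ {x}) R := Finset.disjoint_of_subset_left Finset.sdiff_subset hPR
  have hP : (P \ {x}) ∪ {x} = P := Finset.sdiff_union_of_subset (by simpa using hx)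
  have h1 := hmax (P \ {x}) (R ∪ {x}) (Finset.disjoint_union_right.2 ⟨hd3, hd1⟩) (by
    rw [← hu, ← Finset.union_assoc, Finset.union_right_comm, hP])
  have e1 : ed G P R = ed G (P \ {x}) R + ed G {x} R := by
    conv_lhs => rw [← hP]
    rw [ed_union_left G hd1]
  have e2 : ed G {x} P = ed G {x} (P \ {x}) + ed G {x} {x} := by
    conv_lhs => rw [← hP]
    rw [ed_union_right G hd1]
  have e3 : ed G {x} {x} = 0 := ed_zero (by
    intro a ha b hb hab
    rw [Finset.mem_singleton] at ha hb
    subst ha; subst hb; exact G.loopless.irrefl _ hab)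
  rw [ed_union_right G hd2, ed_comm G (P \ {x}) {x}] at h1
  have h2 : ed G {x} P ≤ ed G {x} R := by linarith
  have e4 : ∀ T, ed G {x} T = (1 / (Fintype.card V : ℝ)) * dg G x T := by
    intro T; unfold ed it; simp
  rw [e4, e4] at h2
  have : 0 < Fintype.card V := Fintype.card_pos_iff.2 ⟨x⟩
  exact le_of_mul_le_mul_left h2 (by positivity)

theorem it_le_of_subset {S T : Finset V} (h : S ⊆ T) {f : V → ℝ} (hf : ∀ x ∈ T, 0 ≤ f x) : it S f ≤ it T f :=
  mul_le_mul_of_nonneg_left (Finset.sum_le_sum_of_subset_of_nonneg h fun y hy _ => hf y hy) w_nonneg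

open Classical in
theorem ed_split {P R N : Finset V} (h : Disjoint P R) (hu : P ∪ R = N) :
    ed G N N = ed G P P + ed G R R + 2 * ed G P R := by
  rw [← hu, ed_union_left G h, ed_union_right G h, ed_union_right G h, ed_comm G R P]; ring

open Classical in
/-- One-sided facts about the light part of one side of a maximum cut. -/
theorem side_facts {N P R : Finset V} (hT : TF G N) (hP : P ⊆ N) (hR : R ⊆ N)
    (hloc : ∀ x ∈ P, dg G x P ≤ dg G x R) :
    ∃ A B : Finset V, Disjoint A B ∧ A ∪ B = P ∧ ed G A A = 0 ∧
      (∀ x ∈ B, dg G x R ≤ mu R / 2) ∧ (∀ x ∈ B, dg G x P ≤ mu R / 2) := by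
  refine ⟨P.filter fun x => ¬ (2 * dg G x R ≤ mu R), P.filter fun x => 2 * dg G x R ≤ mu R, ?_, ?_, ?_, ?_, ?_⟩
  · exact (Finset.disjoint_filter_filter_not _ _ _).symm
  · rw [Finset.union_comm, Finset.filter_union_filter_not_eq]
  · apply ed_zero
    intro x hx y hy hxy
    simp only [Finset.mem_filter, not_le] at hx hy
    have := tf_deg hT (hP hx.1) (hP hy.1) hxy hR
    linarith [hx.2, hy.2]
  · intro x hx
    simp only [Finset.mem_filter] at hx
    linarith [hx.2]
  · intro x hx
    simp only [Finset.mem_filter] at hx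
    linarith [hx.2, hloc x hx.1]

set_option maxHeartbeats 2000000 in
open Classical in
theorem regimeMain [Nonempty V] (hd : Dense G) {N : Finset V} (hT : TF G N) {d : ℝ}
    (hdeg : ∀ x, dg G x Finset.univ ≤ d) (hN : mu N = d) (hd1 : 1 / 2 ≤ d) (hd2 : d < 2 / 3) : False := by
  have hd0 : 0 < d := by linarith
  have t0 := test1 G hd N (1 / (2 * d)) (by positivity) (by
    rw [div_le_one (by positivity)]; linarith) (by rw [hN]; field_simp)
  have hS1 : 4 / 9 * d ^ 2 < ed G N N := by
    have e1 : (1 / (2 * d)) ^ 2 * ed G N N = ed G N N / (4 * d ^ 2) := by field_simp; ring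
    rw [e1, lt_div_iff₀ (by positivity)] at t0
    linarith
  obtain ⟨P, R, hPR, hun, hmax⟩ := exists_maxcut G N
  obtain ⟨S, hS, hS0, hS2⟩ := exists_cut hT (nonempty_of_mu (by linarith : 0 < mu N))
  have hcut := hmax S (N \ S) Finset.disjoint_sdiff (Finset.union_sdiff_of_subset hS)
  rw [hN] at hS2
  have hdd : 0 < d ^ 2 := by positivity
  have hmT : 8 / 9 * ed G N N - 16 / 81 * d ^ 2 ≤ ed G P R := by
    have h1 : d ^ 2 * (8 / 9 * ed G N N - 16 / 81 * d ^ 2) ≤ d ^ 2 * ed G P R := by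
      have := mul_le_mul_of_nonneg_left hcut hdd.le
      linarith [sq_nonneg (ed G N N - 4 / 9 * d ^ 2)]
    exact le_of_mul_le_mul_left h1 hdd
  have hm : 16 / 81 * d ^ 2 ≤ ed G P R := by linarith
  have hPN : P ⊆ N := by rw [← hun]; exact Finset.subset_union_left
  have hRN : R ⊆ N := by rw [← hun]; exact Finset.subset_union_right
  have hlocP := loc_opt hPR hun hmax
  have hlocR : ∀ x ∈ R, dg G x R ≤ dg G x P := by
    apply loc_opt hPR.symm (by rw [Finset.union_comm, hun])
    intro P' R' h1 h2
    rw [ed_comm G R P, ed_comm G P' R']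
    exact hmax R' P' h1.symm (by rw [Finset.union_comm, h2])
  have hpr : mu P + mu R = d := by rw [← mu_union hPR, hun, hN]
  obtain ⟨P0, ZP, dP, uP, iP, lP1, lP2⟩ := side_facts hT hPN hRN hlocP
  obtain ⟨R0, ZR, dR, uR, iR, lR1, lR2⟩ := side_facts hT hRN hPN hlocR
  have sP0 : P0 ⊆ P := by rw [← uP]; exact Finset.subset_union_left
  have sZP : ZP ⊆ P := by rw [← uP]; exact Finset.subset_union_right
  have sR0 : R0 ⊆ R := by rw [← uR]; exact Finset.subset_union_left
  have sZR : ZR ⊆ R := by rw [← uR]; exact Finset.subset_union_right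
  have mp : mu P = mu P0 + mu ZP := by rw [← uP, mu_union dP]
  have mr : mu R = mu R0 + mu ZR := by rw [← uR, mu_union dR]
  have d00 : Disjoint P0 R0 := Finset.disjoint_of_subset_left sP0 (Finset.disjoint_of_subset_right sR0 hPR)
  have dP0ZR : Disjoint P0 ZR := Finset.disjoint_of_subset_left sP0 (Finset.disjoint_of_subset_right sZR hPR)
  have dR0ZP : Disjoint R0 ZP := (Finset.disjoint_of_subset_left sZP (Finset.disjoint_of_subset_right sR0 hPR)).symm
  have dZZ : Disjoint ZP ZR := Finset.disjoint_of_subset_left sZP (Finset.disjoint_of_subset_right sZR hPR)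
  obtain ⟨Z, hZ⟩ : ∃ Z, Z = ZP ∪ ZR := ⟨_, rfl⟩
  have dP0Z : Disjoint P0 Z := by rw [hZ]; exact Finset.disjoint_union_right.2 ⟨dP, dP0ZR⟩
  have dR0Z : Disjoint R0 Z := by rw [hZ]; exact Finset.disjoint_union_right.2 ⟨dR0ZP, dR⟩
  have sZN : Z ⊆ N := by rw [hZ]; exact Finset.union_subset (sZP.trans hPN) (sZR.trans hRN)
  have sP0N := sP0.trans hPN
  have sR0N := sR0.trans hRN
  have mZ : mu Z = mu ZP + mu ZR := by rw [hZ, mu_union dZZ]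
  have nP := mu_nonneg P
  have nR := mu_nonneg R
  have nP0 := mu_nonneg P0
  have nR0 := mu_nonneg R0
  have nZP := mu_nonneg ZP
  have nZR := mu_nonneg ZR
  -- decomposition of the cut
  have eZPR : ed G ZP R ≤ mu ZP * (mu R / 2) := it_le lP1
  have eZRP : ed G ZR P ≤ mu ZR * (mu P / 2) := it_le lR1
  have c1 : ed G P R = ed G P0 R + ed G ZP R := by
    conv_lhs => rw [← uP]
    rw [ed_union_left G dP]
  have c2 : ed G P R = ed G R0 P + ed G ZR P := by
    rw [ed_comm G P R]
    conv_lhs => rw [← uR]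
    rw [ed_union_left G dR]
  have c3 : ed G P0 R = ed G P0 R0 + ed G ZR P0 := by
    rw [ed_comm G ZR P0, ← ed_union_right G dR, uR]
  have c4 : ed G ZR P0 ≤ ed G ZR P := by
    rw [ed_comm G ZR P0, ed_comm G ZR P]; exact ed_mono_left G sP0 ZR
  have h1 : ed G P R ≤ mu P * mu R - mu ZP * mu R / 2 := by
    have := ed_le_prod (G := G) P0 R
    have e : mu P0 = mu P - mu ZP := by linarith
    rw [e] at this
    linarith
  have h2 : ed G P R ≤ mu P * mu R - mu ZR * mu P / 2 := by
    have := ed_le_prod (G := G) R0 P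
    have e : mu R0 = mu R - mu ZR := by linarith
    rw [e] at this
    linarith
  have h3 : ed G P R ≤ ed G P0 R0 + mu ZP * mu R / 2 + mu ZR * mu P / 2 := by linarith
  have f1 := num_f d (mu P) (mu R) (mu ZR) _ hd0 nP hpr hm h2
  have f2 := num_f d (mu R) (mu P) (mu ZP) _ hd0 nR (by linarith) hm (by linarith)
  have hr0 : 0 < mu R0 := by linarith
  have hp0 : 0 < mu P0 := by linarith
  -- test (A)
  have hA : (d - (mu ZP + mu ZR)) / 18 < (1 - d - (mu ZP + mu ZR)) * ed G P0 R0
      + (1 / 2 - (mu ZP + mu ZR)) * (ed G Z P0 + ed G Z R0) + (d - (mu ZP + mu ZR)) * (ed G Z Z / 2) := by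
    obtain ⟨ρ, hρ⟩ : ∃ ρ, ρ * mu R0 = 1 / 2 - mu Z - mu P0 := ⟨(1 / 2 - mu Z - mu P0) / mu R0, by field_simp⟩
    obtain ⟨τ, hτ⟩ : ∃ τ, τ * mu P0 = 1 / 2 - mu Z - mu R0 := ⟨(1 / 2 - mu Z - mu R0) / mu P0, by field_simp⟩
    have r0 : 0 ≤ ρ := by
      by_contra hcon; push Not at hcon
      have := mul_lt_mul_of_pos_right hcon hr0; linarith
    have r1 : ρ ≤ 1 := by
      by_contra hcon; push Not at hcon
      have := mul_lt_mul_of_pos_right hcon hr0; linarith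
    have s0 : 0 ≤ τ := by
      by_contra hcon; push Not at hcon
      have := mul_lt_mul_of_pos_right hcon hp0; linarith
    have s1 : τ ≤ 1 := by
      by_contra hcon; push Not at hcon
      have := mul_lt_mul_of_pos_right hcon hp0; linarith
    have t1 := test3 G hd Z P0 R0 1 1 ρ dP0Z.symm dR0Z.symm d00 (by norm_num) le_rfl (by norm_num) le_rfl r0 r1
      (by linarith)
    have t2 := test3 G hd Z P0 R0 1 τ 1 dP0Z.symm dR0Z.symm d00 (by norm_num) le_rfl s0 s1 (by norm_num) le_rfl
      (by linarith)
    rw [iP, iR] at t1 t2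
    have g1 := mul_lt_mul_of_pos_left t1 hr0
    have g2 := mul_lt_mul_of_pos_left t2 hp0
    have e1 : mu R0 * (1 ^ 2 * ed G Z Z + 1 ^ 2 * 0 + ρ ^ 2 * 0 + 2 * 1 * 1 * ed G Z P0 + 2 * 1 * ρ * ed G Z R0
      + 2 * 1 * ρ * ed G P0 R0) = mu R0 * (ed G Z Z + 2 * ed G Z P0) + 2 * (ρ * mu R0) * (ed G Z R0 + ed G P0 R0) := by
      ring
    have e2 : mu P0 * (1 ^ 2 * ed G Z Z + τ ^ 2 * 0 + 1 ^ 2 * 0 + 2 * 1 * τ * ed G Z P0 + 2 * 1 * 1 * ed G Z R0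
      + 2 * τ * 1 * ed G P0 R0) = mu P0 * (ed G Z Z + 2 * ed G Z R0) + 2 * (τ * mu P0) * (ed G Z P0 + ed G P0 R0) := by
      ring
    rw [e1, hρ] at g1
    rw [e2, hτ] at g2
    have e3 : mu P0 = d - (mu ZP + mu ZR) - mu R0 := by linarith
    rw [mZ, e3] at g1 g2
    linarith
  -- the two degrees of a light vertex
  obtain ⟨X, hX⟩ : ∃ X : V → ℝ, X = fun z => min (dg G z P0) (dg G z R0) := ⟨_, rfl⟩
  obtain ⟨Y, hY⟩ : ∃ Y : V → ℝ, Y = fun z => max (dg G z P0) (dg G z R0) := ⟨_, rfl⟩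
  have hXYs : it Z X + it Z Y = ed G Z P0 + ed G Z R0 := by
    unfold ed
    rw [← it_add, ← it_add, hX, hY]
    exact it_congr fun z _ => min_add_max _ _
  have hX0 : ∀ z ∈ Z, 0 ≤ X z := fun z _ => by rw [hX]; exact le_min (dg_nonneg G z _) (dg_nonneg G z _)
  have eN : ed G N N = 2 * ed G P0 R0 + 2 * (ed G Z P0 + ed G Z R0) + ed G Z Z := by
    have hu2 : (P0 ∪ R0) ∪ Z = N := by
      rw [← hun, ← uP, ← uR, hZ]
      ext x; simp only [Finset.mem_union]; tauto
    have hdis : Disjoint (P0 ∪ R0) Z := Finset.disjoint_union_left.2 ⟨dP0Z, dR0Z⟩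
    rw [ed_split hdis hu2, ed_split d00 rfl, iP, iR, ed_comm G (P0 ∪ R0) Z, ed_union_right G d00]
    ring
  -- the majority cut
  have hbmaj : (ed G P P + ed G R R) / 2 ≤ it Z X + ed G Z Z / 2 := by
    set Z1 := Z.filter fun z => dg G z P0 ≤ dg G z R0 with hZ1
    set Z2 := Z.filter fun z => ¬ (dg G z P0 ≤ dg G z R0) with hZ2
    have hdz : Disjoint Z1 Z2 := Finset.disjoint_filter_filter_not _ _ _
    have huz : Z1 ∪ Z2 = Z := Finset.filter_union_filter_not_eq _ _
    have s1 : Z1 ⊆ Z := Finset.filter_subset _ _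
    have s2 : Z2 ⊆ Z := Finset.filter_subset _ _
    have q1 : Disjoint P0 Z1 := Finset.disjoint_of_subset_right s1 dP0Z
    have q2 : Disjoint R0 Z2 := Finset.disjoint_of_subset_right s2 dR0Z
    have q3 : Disjoint P0 Z2 := Finset.disjoint_of_subset_right s2 dP0Z
    have q4 : Disjoint R0 Z1 := Finset.disjoint_of_subset_right s1 dR0Z
    have hcd : Disjoint (P0 ∪ Z1) (R0 ∪ Z2) := by
      rw [Finset.disjoint_union_left, Finset.disjoint_union_right, Finset.disjoint_union_right]
      exact ⟨⟨d00, q3⟩, ⟨q4.symm, hdz⟩⟩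
    have hcu : (P0 ∪ Z1) ∪ (R0 ∪ Z2) = N := by
      have : (P0 ∪ Z1) ∪ (R0 ∪ Z2) = (P0 ∪ R0) ∪ (Z1 ∪ Z2) := by
        ext x; simp only [Finset.mem_union]; tauto
      rw [this, huz, ← hun, ← uP, ← uR, hZ]
      ext x; simp only [Finset.mem_union]; tauto
    have k1 := hmax _ _ hcd hcu
    have k2 := ed_split (G := G) hPR hun
    have k3 := ed_split (G := G) hcd hcu
    have k4 := ed_split (G := G) q1 rfl
    have k5 := ed_split (G := G) q2 rfl
    rw [iP] at k4
    rw [iR] at k5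
    have k6 := ed_split (G := G) hdz huz
    have k7 := ed_nonneg G Z1 Z2
    have k8 : ed G P0 Z1 = it Z1 X := by
      rw [ed_comm]
      refine it_congr fun z hz => ?_
      rw [hX]; exact (min_eq_left (Finset.mem_filter.1 hz).2).symm
    have k9 : ed G R0 Z2 = it Z2 X := by
      rw [ed_comm]
      refine it_congr fun z hz => ?_
      rw [hX]; exact (min_eq_right (not_le.1 (Finset.mem_filter.1 hz).2).le).symm
    have k10 : it Z X = it Z1 X + it Z2 X := by rw [← it_union hdz, huz]
    linarith
  have hB : 2 * |mu P - mu R| ≤ 1 - d →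
      ed G P0 R0 + it Z Y - 11 / 10 * it Z X - 11 / 10 * (ed G Z Z / 2) < d / 2 - 2 / 9 := by
    intro hk
    have k1 := lem2 hd hdeg P R hPR hpr (by linarith) hd2.le hk
    have k2 := ed_split (G := G) hPR hun
    have k3 := ed_nonneg G P P
    have k4 := ed_nonneg G R R
    obtain ⟨b, hb⟩ : ∃ b, b = (ed G P P + ed G R R) / 2 := ⟨_, rfl⟩
    rw [← hb] at k1 hbmaj
    have b0 : 0 ≤ b := by linarith
    have hdd2 : d ^ 2 ≤ 4 / 9 := num_aux1 hd0.le hd2.le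
    have b1 : b ≤ 1 / 90 := by linarith
    have b2 : 9 * b ^ 2 ≤ 1 / 10 * b := num_aux2 b0 b1
    linarith
  have hman := tf_mantel hT sZN
  rw [mZ] at hman
  refine main_core (Z := Z) (X := X) (Y := Y) (H := fun z => if z ∈ ZP then mu R / 2 else mu P / 2)
    (d := d) (p := mu P) (r := mu R) (a := mu ZP) (b := mu ZR) (m := ed G P R) (m0 := ed G P0 R0)
    (eZ := ed G Z Z / 2) hd1 hd2 nP nR hpr nZP nZR mZ hm h1 h2 h3 ?_ ?_ hX0 ?_ ?_ ?_ ?_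
    (by linarith [ed_nonneg G Z Z]) (by linarith) (by rw [hXYs]; exact hA) hB
  · have e1 : mu P - mu ZP = mu P0 := by linarith
    have e2 : mu R - mu ZR = mu R0 := by linarith
    rw [e1, e2]; exact ed_le_prod P0 R0
  · intro z hz
    have e1 : mu P - mu ZP = mu P0 := by linarith
    have e2 : mu R - mu ZR = mu R0 := by linarith
    have e3 : X z * Y z = dg G z P0 * dg G z R0 := by rw [hX, hY]; exact min_mul_max _ _
    rw [e1, e2, e3]
    exact tf_prod hT (sZN hz) sP0N sR0N
  · intro z _; rw [hX, hY]; exact min_le_max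
  · intro z hz
    have m1 := dg_mono G z sP0
    have m2 := dg_mono G z sR0
    rw [hY]
    by_cases h : z ∈ ZP
    · simp only [h, if_true]
      exact max_le (m1.trans (lP2 z h)) (m2.trans (lP1 z h))
    · have h' : z ∈ ZR := by
        rw [hZ, Finset.mem_union] at hz; tauto
      simp only [h, if_false]
      exact max_le (m1.trans (lR1 z h')) (m2.trans (lR2 z h'))
  · intro z _
    by_cases h : z ∈ ZP <;> simp [h]
  · rw [hZ, it_union dZZ]
    have e1 : it ZP (fun z => if z ∈ ZP then mu R / 2 else mu P / 2) = it ZP (fun _ => mu R / 2) :=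
      it_congr fun z hz => by simp [hz]
    have e2 : it ZR (fun z => if z ∈ ZP then mu R / 2 else mu P / 2) = it ZR (fun _ => mu P / 2) :=
      it_congr fun z hz => by
        have : z ∉ ZP := Finset.disjoint_right.1 dZZ hz
        simp [this]
    rw [e1, e2, it_const, it_const]; ring

open Classical in
theorem not_dense [Nonempty V] (hG : G.CliqueFree 4) (hd : Dense G) : False := by
  obtain ⟨v, -, hv⟩ := Finset.exists_max_image (Finset.univ : Finset V) (fun x => dg G x Finset.univ)
    Finset.univ_nonempty
  set N := Finset.univ.filter fun x => G.Adj v x with hNdef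
  have hN : mu N = dg G v Finset.univ := by
    unfold dg mu
    rw [hNdef, Finset.card_filter]; push_cast; rfl
  have hT : TF G N := by
    intro x hx y hy z hz hxy hxz hyz
    simp only [hNdef, Finset.mem_filter, Finset.mem_univ, true_and] at hx hy hz
    refine hG {v, x, y, z} ?_
    refine (SimpleGraph.is3Clique_triple_iff.2 ⟨hxy, hxz, hyz⟩).insert ?_
    intro b hb
    simp only [Finset.mem_insert, Finset.mem_singleton] at hb
    rcases hb with rfl | rfl | rfl <;> assumption
  have hdeg : ∀ x, dg G x Finset.univ ≤ dg G v Finset.univ := fun x => hv x (Finset.mem_univ x)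
  have h0 := regime0 hd hdeg
  rcases lt_or_ge (dg G v Finset.univ) (1 / 2) with h1 | h1
  · exact regimeI hd hT hdeg hN h0 h1
  · rcases lt_or_ge (dg G v Finset.univ) (2 / 3) with h2 | h2
    · exact regimeMain hd hT hdeg hN h1 h2
    · exact regimeIV hd hT hN h2

end mainregime
end SparseHalf

open Classical in
/-- Every `K₄`-free graph on `n` vertices contains a set of `⌊n/2⌋` vertices
spanning at most `n² / 18` edges. -/
theorem k4free_sparse_half (n : ℕ) (G : SimpleGraph (Fin n))
    [DecidableRel G.Adj] (hG : G.CliqueFree 4) :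
    ∃ S : Finset (Fin n), S.card = n / 2 ∧
      ((G.edgeFinset.filter (fun e => ∀ v ∈ e, v ∈ S)).card : ℝ) ≤ n ^ 2 / 18 := by
  rcases Nat.eq_zero_or_pos n with rfl | hn
  · refine ⟨∅, by simp, ?_⟩
    rw [Finset.card_eq_zero.2]
    · simp
    · refine Finset.filter_eq_empty_iff.2 fun e _ => ?_
      induction e with | _ x y => exact x.elim0
  have : Nonempty (Fin n) := ⟨⟨0, hn⟩⟩
  have hnd : ¬ SparseHalf.Dense G := fun h => SparseHalf.not_dense hG h
  unfold SparseHalf.Dense at hnd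
  push Not at hnd
  obtain ⟨f, hf, hs, hq⟩ := hnd
  have hn0 : (0:ℝ) < n := by exact_mod_cast hn
  simp only [SparseHalf.it, Fintype.card_fin] at hs hq
  have hs' : ∑ x, f x = n / 2 := by
    field_simp at hs; linarith
  have hq' : SparseHalf.QF (SparseHalf.ad G) f ≤ n ^ 2 / 9 := by
    have e1 : (1 / (n : ℝ)) * ∑ x, (1 / (n : ℝ)) * (∑ y, SparseHalf.ad G x y * f y) * f x =
        (1 / (n : ℝ)) ^ 2 * SparseHalf.QF (SparseHalf.ad G) f := by
      unfold SparseHalf.QF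
      simp only [Finset.mul_sum, Finset.sum_mul]
      refine Finset.sum_congr rfl fun x _ => Finset.sum_congr rfl fun y _ => ?_
      ring
    rw [e1] at hq
    have e2 := mul_le_mul_of_nonneg_left hq (sq_nonneg (n : ℝ))
    have e3 : (n : ℝ) ^ 2 * ((1 / (n : ℝ)) ^ 2 * SparseHalf.QF (SparseHalf.ad G) f) =
      SparseHalf.QF (SparseHalf.ad G) f := by field_simp
    rw [e3] at e2
    linarith
  have hfl : (((n / 2 : ℕ)) : ℝ) ≤ n / 2 := Nat.cast_div_le
  obtain ⟨c, hc⟩ : ∃ c : ℝ, c * (n / 2) = ((n / 2 : ℕ) : ℝ) := ⟨((n / 2 : ℕ) : ℝ) / (n / 2), by field_simp⟩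
  have hc0 : 0 ≤ c := by
    by_contra hcon; push Not at hcon
    have h1 := mul_neg_of_neg_of_pos hcon (by positivity : (0:ℝ) < n / 2)
    have h2 : (0:ℝ) ≤ ((n / 2 : ℕ) : ℝ) := by positivity
    linarith
  have hc1 : c ≤ 1 := by
    by_contra hcon; push Not at hcon
    have := mul_lt_mul_of_pos_right hcon (by positivity : (0:ℝ) < n / 2); linarith
  obtain ⟨S, hS, hS2⟩ := SparseHalf.rounding (SparseHalf.ad G) (SparseHalf.ad_self G) (SparseHalf.ad_nonneg G)
    (n / 2) _ (fun x => c * f x)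
    (fun x => ⟨mul_nonneg hc0 (hf x).1, mul_le_one₀ hc1 (hf x).1 (hf x).2⟩)
    (by rw [← Finset.mul_sum, hs', hc]) le_rfl
  refine ⟨S, hS, ?_⟩
  have h1 := SparseHalf.edges_count G S
  have h2 : SparseHalf.QF (SparseHalf.ad G) (fun x => c * f x) = c ^ 2 * SparseHalf.QF (SparseHalf.ad G) f := by
    unfold SparseHalf.QF
    simp only [Finset.mul_sum]
    refine Finset.sum_congr rfl fun x _ => Finset.sum_congr rfl fun y _ => ?_
    ring
  have h3 : 0 ≤ SparseHalf.QF (SparseHalf.ad G) f :=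
    Finset.sum_nonneg fun x _ => Finset.sum_nonneg fun y _ =>
      mul_nonneg (SparseHalf.ad_nonneg G x y) (mul_nonneg (hf x).1 (hf y).1)
  have h4 : c ^ 2 ≤ 1 := by nlinarith
  have h5 := mul_le_mul_of_nonneg_right h4 h3
  have h6 : ∀ k : ℝ, 2 * k = ∑ x ∈ S, ∑ y ∈ S, SparseHalf.ad G x y → k ≤ (n : ℝ) ^ 2 / 18 := by
    intro k hk
    linarith
  refine h6 _ ?_
  convert h1
end
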